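/- arXiv:1510.05589 — 2 statements merged into one kernel-verified Lean document; each statement's English description precedes it below -/
import Mathlib

section
/- Let K be a nonempty compact metrizable space with finite fd-height k' = k + 1 (k a natural number). Then there is an 8^(k+1)-good map of C_p(I) onto C_p(K), where I = [0,1]. In particular, the closed unit interval ℓ-dominates K. -/
open Set Function

noncomputable section

/-- Topology of pointwise convergence on `C(X, ℝ)`. -/
def ptTop (X : Type*) [TopologicalSpace X] : TopologicalSpace C(X, ℝ) :=
  TopologicalSpace.induced (fun f => (f : X → ℝ)) Pi.topologicalSpace

/-- `X` ℓ-dominates `Y`: a continuous linear map of `C_p(X)` onto `C_p(Y)`. -/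
def LDominates (X Y : Type*) [TopologicalSpace X] [TopologicalSpace Y] : Prop :=
  ∃ L : C(X, ℝ) →ₗ[ℝ] C(Y, ℝ), @Continuous _ _ (ptTop X) (ptTop Y) L ∧ Surjective L

/-- Covering dimension at most `n`. -/
def CovDimLE (X : Type*) [TopologicalSpace X] (n : ℕ) : Prop :=
  ∀ (ι : Type) (U : ι → Set X), Finite ι → (∀ i, IsOpen (U i)) → (⋃ i, U i) = univ →
    ∃ V : ι → Set X, (∀ i, IsOpen (V i)) ∧ (∀ i, V i ⊆ U i) ∧ (⋃ i, V i) = univ ∧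
      ∀ x : X, {i | x ∈ V i}.ncard ≤ n + 1

/-- Finite (covering) dimensional space. -/
def FinDimSpace (X : Type*) [TopologicalSpace X] : Prop := ∃ n : ℕ, CovDimLE X n

/-- Strongly countable dimensional space. -/
def StronglyCountableDim (X : Type*) [TopologicalSpace X] : Prop :=
  ∃ F : ℕ → Set X, (∀ n, IsClosed (F n)) ∧ (∀ n, FinDimSpace ↥(F n)) ∧ (⋃ n, F n) = univ

/-- `I(S)` relative to a subset: points of `S` with a relatively open
finite dimensional neighbourhood in `S`. -/
def fdI (X : Type*) [TopologicalSpace X] (S : Set X) : Set X :=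
  {x | x ∈ S ∧ ∃ U : Set X, IsOpen U ∧ x ∈ U ∧ FinDimSpace ↥(U ∩ S)}

/-- The transfinite derived sets `K^[α]`. -/
def fdDerived (X : Type*) [TopologicalSpace X] : Ordinal → Set X := fun o =>
  Ordinal.limitRecOn o (univ : Set X)
    (fun _ S => S \ fdI X S)
    (fun o _ ih => ⋂ (o' : Ordinal) (h : o' < o), ih o' h)

/-- A k_ω sequence for `X`. -/
def IsKOmegaSeq (X : Type*) [TopologicalSpace X] (K : ℕ → Set X) : Prop :=
  (∀ n, IsCompact (K n)) ∧ (∀ n, K n ⊆ K (n + 1)) ∧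
  (∀ C : Set X, IsCompact C → ∃ n, C ⊆ K n) ∧
  (∀ A : Set X, (∀ n, ∃ F : Set X, IsClosed F ∧ A ∩ K n = F ∩ K n) → IsClosed A)

def KOmegaSpace (X : Type*) [TopologicalSpace X] : Prop := ∃ K : ℕ → Set X, IsKOmegaSeq X K

/-- Submetrizable: there is a coarser metrizable topology. -/
def Submetrizable (X : Type*) [TopologicalSpace X] : Prop :=
  ∃ t' : TopologicalSpace X, (∀ s : Set X, @IsOpen X t' s → IsOpen s) ∧
    @TopologicalSpace.MetrizableSpace X t'

def Hemicompact (X : Type*) [TopologicalSpace X] : Prop :=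
  ∃ K : ℕ → Set X, (∀ n, IsCompact (K n)) ∧ ∀ C : Set X, IsCompact C → ∃ n, C ⊆ K n

/-- `B` is (functionally) bounded in `X`. -/
def CBounded (X : Type*) [TopologicalSpace X] (B : Set X) : Prop :=
  ∀ f : C(X, ℝ), ∃ M : ℝ, ∀ x ∈ B, |f x| ≤ M

/-- μ-space: closed bounded subsets are compact. -/
def MuSpace (X : Type*) [TopologicalSpace X] : Prop :=
  ∀ B : Set X, IsClosed B → CBounded X B → IsCompact B

/-- `C(K; A)`: continuous functions vanishing on `A`, as a submodule. -/
def Czero (K : Type*) [TopologicalSpace K] (A : Set K) : Submodule ℝ C(K, ℝ) where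
  carrier := {f | ∀ x ∈ A, f x = 0}
  add_mem' := by intro f g hf hg x hx; simp [hf x hx, hg x hx]
  zero_mem' := by intro x hx; simp
  smul_mem' := by intro c f hf x hx; simp [hf x hx]

/-- Pointwise topology on `C(K;A)`. -/
def ptTopSub {K : Type*} [TopologicalSpace K] (A : Set K) :
    TopologicalSpace (Czero K A) :=
  TopologicalSpace.induced (fun f => (f : C(K, ℝ))) (ptTop K)

/-- `c`-good map between relative function spaces. -/
def IsCGood {K₁ K₂ : Type*} [TopologicalSpace K₁] [CompactSpace K₁]
    [TopologicalSpace K₂] [CompactSpace K₂] (A₁ : Set K₁) (A₂ : Set K₂) (c : ℝ)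
    (L : Czero K₁ A₁ →ₗ[ℝ] Czero K₂ A₂) : Prop :=
  @Continuous _ _ (ptTopSub A₁) (ptTopSub A₂) L ∧
  (∀ g : Czero K₁ A₁, ‖(L g : C(K₂, ℝ))‖ ≤ ‖(g : C(K₁, ℝ))‖) ∧
  (∀ f : Czero K₂ A₂, ∃ g : Czero K₁ A₁, L g = f ∧
    ‖(g : C(K₁, ℝ))‖ ≤ c * ‖(f : C(K₂, ℝ))‖)

/-- `c`-good map between full function spaces. -/
def IsCGoodMap {K₁ K₂ : Type*} [TopologicalSpace K₁] [CompactSpace K₁]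
    [TopologicalSpace K₂] [CompactSpace K₂] (c : ℝ)
    (L : C(K₁, ℝ) →ₗ[ℝ] C(K₂, ℝ)) : Prop :=
  @Continuous _ _ (ptTop K₁) (ptTop K₂) L ∧
  (∀ g : C(K₁, ℝ), ‖L g‖ ≤ ‖g‖) ∧
  (∀ f : C(K₂, ℝ), ∃ g : C(K₁, ℝ), L g = f ∧ ‖g‖ ≤ c * ‖f‖)

/-
Write `K = Y` and `A = Y^[1]`. Every compact subset of `Y \ A` has, by local finite dimensionality,
fine finite open covers of bounded order `N`. Following Ostrand, such a cover is replaced by `m`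
families of disjoint closed sets such that every point is missed by at most `N` of them, and Baire's
theorem gives maps `φ s` to `I`, one for each family, which separate the members of all families at
arbitrarily small mesh. For `m` large compared with `N`, every function on the compact set is then
nearly a mean of functions `g ∘ φ s` with a single `g`, and iterating the error makes this exact.

Doing this on annuli around `A`, with disjoint subintervals of `I` shrinking to `0`, and gluing by a
partition of unity yields an operator `R` of norm `2` onto the functions that vanish on `A`. If `L`
is a `c`-good map onto `C(A)` and `e` is Dugundji's extension operator, then
`g ↦ (1 / 8) • e (L (g ∘ shrink 0)) + (7 / 16) • R (g ∘ shrink 1)` is an `8 * c`-good map onto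
`C(Y)`, and the theorem follows by induction on the height.
-/

open Topology Filter

universe u

/-! ### Operators between spaces of pointwise convergence -/

section PointwiseOperators

variable {X Y Z : Type*} [TopologicalSpace X] [TopologicalSpace Y] [TopologicalSpace Z]

theorem continuous_eval_ptTop (x : X) : @Continuous _ _ (ptTop X) _ fun g : C(X, ℝ) => g x :=
  @Continuous.comp _ _ _ (ptTop X) _ _ _ _ (continuous_apply x) continuous_induced_dom

theorem continuous_ptTop_iff {L : C(X, ℝ) → C(Y, ℝ)} :
    @Continuous _ _ (ptTop X) (ptTop Y) L ↔ ∀ y, @Continuous _ _ (ptTop X) _ fun g => L g y := by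
  let _ : TopologicalSpace C(X, ℝ) := ptTop X
  exact continuous_induced_rng.trans continuous_pi_iff

variable [CompactSpace X] [CompactSpace Y]

/-- A linear functional on `C(X)` that is continuous for pointwise convergence and has norm at most
`c` for the supremum norm; in other words, a finitely supported measure of mass at most `c`. -/
structure IsPtFunctional (c : ℝ) (ℓ : C(X, ℝ) → ℝ) : Prop where
  isLinearMap : IsLinearMap ℝ ℓ
  continuous : @Continuous _ _ (ptTop X) _ ℓ
  abs_le : ∀ g, |ℓ g| ≤ c * ‖g‖

/-- An operator that is continuous and linear between the spaces `C_p(X)` and `C_p(Y)`, and has norm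
at most `c` for the supremum norms. -/
def IsPtOperator (c : ℝ) (L : C(X, ℝ) → C(Z, ℝ)) : Prop :=
  ∀ z, IsPtFunctional c fun g => L g z

namespace IsPtFunctional

variable {c c' : ℝ} {ℓ ℓ' : C(X, ℝ) → ℝ}

theorem eval (x : X) : IsPtFunctional 1 fun g : C(X, ℝ) => g x where
  isLinearMap := ⟨fun _ _ => rfl, fun _ _ => rfl⟩
  continuous := continuous_eval_ptTop x
  abs_le g := by simpa using g.norm_coe_le_norm x

theorem zero (hc : 0 ≤ c) : IsPtFunctional c fun _ : C(X, ℝ) => 0 where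
  isLinearMap := ⟨by simp, by simp⟩
  continuous := @continuous_const _ _ (ptTop X) _ _
  abs_le g := by simpa using mul_nonneg hc (norm_nonneg g)

theorem mono (h : IsPtFunctional c ℓ) (hc : c ≤ c') : IsPtFunctional c' ℓ :=
  ⟨h.isLinearMap, h.continuous,
    fun g => (h.abs_le g).trans (mul_le_mul_of_nonneg_right hc (norm_nonneg g))⟩

theorem add (h : IsPtFunctional c ℓ) (h' : IsPtFunctional c' ℓ') :
    IsPtFunctional (c + c') fun g => ℓ g + ℓ' g where
  isLinearMap := (h.isLinearMap.mk' ℓ + h'.isLinearMap.mk' ℓ').isLinear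
  continuous := by
    let _ : TopologicalSpace C(X, ℝ) := ptTop X
    exact h.continuous.add h'.continuous
  abs_le g := (abs_add_le _ _).trans <| (add_le_add (h.abs_le g) (h'.abs_le g)).trans_eq
    (add_mul _ _ _).symm

theorem const_mul (a : ℝ) (h : IsPtFunctional c ℓ) : IsPtFunctional (|a| * c) fun g => a * ℓ g where
  isLinearMap := (a • h.isLinearMap.mk' ℓ).isLinear
  continuous := by
    let _ : TopologicalSpace C(X, ℝ) := ptTop X
    exact continuous_const.mul h.continuous
  abs_le g := by
    rw [abs_mul, mul_assoc]
    exact mul_le_mul_of_nonneg_left (h.abs_le g) (abs_nonneg a)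

theorem sub (h : IsPtFunctional c ℓ) (h' : IsPtFunctional c' ℓ') :
    IsPtFunctional (c + c') fun g => ℓ g - ℓ' g := by
  simpa [sub_eq_add_neg] using h.add (h'.const_mul (-1))

theorem sum_mul {ι : Type*} {s : Finset ι} {w : ι → ℝ} {ℓ : ι → C(X, ℝ) → ℝ} (hc : 0 ≤ c)
    (h : ∀ i ∈ s, IsPtFunctional c (ℓ i)) (hw : ∀ i ∈ s, 0 ≤ w i) (hsum : ∑ i ∈ s, w i ≤ 1) :
    IsPtFunctional c fun g => ∑ i ∈ s, w i * ℓ i g := by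
  suffices IsPtFunctional ((∑ i ∈ s, w i) * c) fun g => ∑ i ∈ s, w i * ℓ i g from
    this.mono (mul_le_of_le_one_left hc hsum)
  clear hsum
  induction s using Finset.cons_induction with
  | empty => simpa using zero le_rfl
  | cons i s hi ih =>
    simp only [Finset.sum_cons, add_mul, Finset.forall_mem_cons] at h hw ⊢
    have hi := h.1.const_mul (w i)
    rw [abs_of_nonneg hw.1] at hi
    exact hi.add (ih h.2 hw.2)

end IsPtFunctional

namespace IsPtOperator

variable {c c' : ℝ}

theorem norm_le {L : C(X, ℝ) → C(Y, ℝ)} (hc : 0 ≤ c) (h : IsPtOperator c L) (g : C(X, ℝ)) :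
    ‖L g‖ ≤ c * ‖g‖ :=
  (ContinuousMap.norm_le _ (by positivity)).2 fun y => (h y).abs_le g

theorem isLinearMap {L : C(X, ℝ) → C(Z, ℝ)} (h : IsPtOperator c L) : IsLinearMap ℝ L :=
  ⟨fun f g => ContinuousMap.ext fun z => (h z).isLinearMap.map_add f g,
    fun a g => ContinuousMap.ext fun z => (h z).isLinearMap.map_smul a g⟩

theorem continuous {L : C(X, ℝ) → C(Z, ℝ)} (h : IsPtOperator c L) :
    @Continuous _ _ (ptTop X) (ptTop Z) L :=
  continuous_ptTop_iff.2 fun z => (h z).continuous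

theorem precomp (h : C(Z, X)) : IsPtOperator 1 fun g : C(X, ℝ) => g.comp h :=
  fun z => .eval (h z)

end IsPtOperator

theorem IsPtFunctional.comp {c c' : ℝ} {ℓ : C(Y, ℝ) → ℝ} {T : C(X, ℝ) → C(Y, ℝ)} (hc : 0 ≤ c)
    (hc' : 0 ≤ c') (h : IsPtFunctional c ℓ) (hT : IsPtOperator c' T) :
    IsPtFunctional (c * c') fun g => ℓ (T g) where
  isLinearMap := ((h.isLinearMap.mk' ℓ).comp (hT.isLinearMap.mk' T)).isLinear
  continuous := @Continuous.comp _ _ _ (ptTop X) (ptTop Y) _ _ _ h.continuous hT.continuous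
  abs_le g := (h.abs_le _).trans <| by
    rw [mul_assoc]
    exact mul_le_mul_of_nonneg_left (hT.norm_le hc' g) hc

theorem IsPtOperator.comp {c c' : ℝ} {S : C(Y, ℝ) → C(Z, ℝ)} {T : C(X, ℝ) → C(Y, ℝ)} (hc : 0 ≤ c)
    (hc' : 0 ≤ c') (hS : IsPtOperator c S) (hT : IsPtOperator c' T) :
    IsPtOperator (c * c') fun g => S (T g) :=
  fun z => (hS z).comp hc hc' hT

theorem IsPtOperator.isCGoodMap {c : ℝ} {L : C(X, ℝ) → C(Y, ℝ)} (h : IsPtOperator 1 L)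
    (hsurj : ∀ f, ∃ g, L g = f ∧ ‖g‖ ≤ c * ‖f‖) : IsCGoodMap c (h.isLinearMap.mk' L) :=
  ⟨h.continuous, fun g => by simpa using h.norm_le zero_le_one g, hsurj⟩

theorem IsCGoodMap.isPtOperator {c : ℝ} {L : C(X, ℝ) →ₗ[ℝ] C(Y, ℝ)} (h : IsCGoodMap c L) :
    IsPtOperator 1 L := fun y =>
  ⟨⟨fun f g => by simp, fun a g => by simp⟩, continuous_ptTop_iff.1 h.1 y,
    fun g => by simpa using ((L g).norm_coe_le_norm y).trans (h.2.1 g)⟩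

end PointwiseOperators

/-! ### Fine covers and families of disjoint closed sets -/

/-- `HasFineCovers C N`: the set `C` has finite open covers of arbitrarily small mesh and of order
at most `N`, which is how the condition `dim C < N` enters the construction. -/
def HasFineCovers {Y : Type*} [PseudoMetricSpace Y] (C : Set Y) (N : ℕ) : Prop :=
  ∀ ε > 0, ∃ 𝒱 : Set (Set Y), 𝒱.Finite ∧
    (∀ V ∈ 𝒱, IsOpen V ∧ ∀ x ∈ V, ∀ y ∈ V, dist x y ≤ ε) ∧
    C ⊆ ⋃₀ 𝒱 ∧ ∀ x, {V ∈ 𝒱 | x ∈ V}.ncard ≤ N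

namespace HasFineCovers

variable {Y : Type*} [PseudoMetricSpace Y] {C C' : Set Y} {N N' : ℕ}

theorem empty : HasFineCovers (∅ : Set Y) 0 := fun _ _ => ⟨∅, by simp⟩

theorem mono (hC : C ⊆ C') (h : HasFineCovers C' N) : HasFineCovers C N := fun ε hε =>
  let ⟨𝒱, hfin, hsmall, hcov, hord⟩ := h ε hε
  ⟨𝒱, hfin, hsmall, hC.trans hcov, hord⟩

theorem union (h : HasFineCovers C N) (h' : HasFineCovers C' N') :
    HasFineCovers (C ∪ C') (N + N') := by
  intro ε hε
  obtain ⟨𝒱, hfin, hsmall, hcov, hord⟩ := h ε hε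
  obtain ⟨𝒱', hfin', hsmall', hcov', hord'⟩ := h' ε hε
  refine ⟨𝒱 ∪ 𝒱', hfin.union hfin', fun V hV => hV.elim (hsmall V) (hsmall' V), ?_, fun x => ?_⟩
  · rw [sUnion_union]
    exact union_subset_union hcov hcov'
  · have hsplit : {V ∈ 𝒱 ∪ 𝒱' | x ∈ V} = {V ∈ 𝒱 | x ∈ V} ∪ {V ∈ 𝒱' | x ∈ V} := sep_union
    rw [hsplit]
    exact (ncard_union_le _ _).trans (add_le_add (hord x) (hord' x))

end HasFineCovers

theorem exists_hasFineCovers_of_isCompact {Y : Type*} [PseudoMetricSpace Y] {C : Set Y}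
    (hC : IsCompact C) (h : ∀ x ∈ C, ∃ U ∈ 𝓝 x, ∃ N, HasFineCovers U N) :
    ∃ N, HasFineCovers C N :=
  hC.induction_on ⟨0, .empty⟩ (fun _ _ hst ⟨N, hN⟩ => ⟨N, hN.mono hst⟩)
    (fun _ _ ⟨_, hN⟩ ⟨_, hN'⟩ => ⟨_, hN.union hN'⟩)
    fun x hx => let ⟨U, hU, hfine⟩ := h x hx; ⟨U, mem_nhdsWithin_of_mem_nhds hU, hfine⟩

theorem CovDimLE.of_homeomorph {X Y : Type*} [TopologicalSpace X] [TopologicalSpace Y] {n : ℕ}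
    (e : X ≃ₜ Y) (h : CovDimLE X n) : CovDimLE Y n := by
  intro ι U hι hUo hUcov
  obtain ⟨V, hVo, hVU, hVcov, hVord⟩ := h ι (fun i => e ⁻¹' U i) hι
    (fun i => (hUo i).preimage e.continuous) (by rw [← preimage_iUnion, hUcov, preimage_univ])
  refine ⟨fun i => e.symm ⁻¹' V i, fun i => (hVo i).preimage e.symm.continuous,
    fun i y hy => ?_, by rw [← preimage_iUnion, hVcov, preimage_univ], fun y => hVord _⟩
  simpa using hVU i hy

theorem FinDimSpace.of_homeomorph {X Y : Type*} [TopologicalSpace X] [TopologicalSpace Y]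
    (e : X ≃ₜ Y) : FinDimSpace X → FinDimSpace Y :=
  fun ⟨n, hn⟩ => ⟨n, hn.of_homeomorph e⟩

theorem CovDimLE.hasFineCovers {Y : Type*} [PseudoMetricSpace Y] [CompactSpace Y] {U : Set Y}
    {n : ℕ} (h : CovDimLE U n) (hU : IsOpen U) : HasFineCovers U (n + 1) := by
  intro ε hε
  obtain ⟨t, -, ht, hcov⟩ := (isCompact_univ (X := Y)).finite_cover_balls (half_pos hε)
  obtain ⟨k, center, -, rfl⟩ := ht.fin_param
  obtain ⟨V, hVo, hVball, hVcov, hVord⟩ := h (Fin k)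
    (fun i => Subtype.val ⁻¹' Metric.ball (center i) (ε / 2)) inferInstance
    (fun i => Metric.isOpen_ball.preimage continuous_subtype_val) (by
      rw [← preimage_iUnion, eq_univ_iff_forall]
      intro x
      simpa using hcov (mem_univ (x : Y)))
  refine ⟨range fun i => Subtype.val '' V i, finite_range _, ?_, fun x hx => ?_, fun x => ?_⟩
  · rintro _ ⟨i, rfl⟩
    refine ⟨hU.isOpenMap_subtype_val _ (hVo i), ?_⟩
    rintro _ ⟨x, hx, rfl⟩ _ ⟨y, hy, rfl⟩
    have hx' : dist (x : Y) (center i) < ε / 2 := hVball i hx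
    have hy' : dist (y : Y) (center i) < ε / 2 := hVball i hy
    linarith [dist_triangle_right (x : Y) y (center i)]
  · obtain ⟨i, hi⟩ := mem_iUnion.1 (hVcov.ge (mem_univ ⟨x, hx⟩))
    exact ⟨_, mem_range_self i, _, hi, rfl⟩
  · have hsub : {W ∈ range fun i => Subtype.val '' V i | x ∈ W} ⊆
        (fun i => Subtype.val '' V i) '' {i | x ∈ Subtype.val '' V i} := by
      rintro _ ⟨⟨i, rfl⟩, hi⟩
      exact ⟨i, hi, rfl⟩
    refine (ncard_le_ncard hsub (toFinite _)).trans ((ncard_image_le (toFinite _)).trans ?_)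
    by_cases hx : x ∈ U
    · have hfiber : {i | x ∈ Subtype.val '' V i} = {i | ⟨x, hx⟩ ∈ V i} := by ext; simp [hx]
      exact hfiber ▸ hVord ⟨x, hx⟩
    · simp [hx]

theorem exists_hasFineCovers_of_finDimSpace {Y : Type*} [PseudoMetricSpace Y] [CompactSpace Y]
    {C : Set Y} (hC : IsClosed C) (h : ∀ x ∈ C, ∃ U, IsOpen U ∧ x ∈ U ∧ FinDimSpace U) :
    ∃ N, HasFineCovers C N :=
  exists_hasFineCovers_of_isCompact hC.isCompact fun x hx =>
    let ⟨_, hU, hxU, n, hn⟩ := h x hx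
    ⟨_, hU.mem_nhds hxU, n + 1, hn.hasFineCovers hU⟩

section LevelPieces

variable {ι Y : Type*}

/-- The points at which the functions `p i` take values at least `b` for `i ∈ J` and at most `a` for
`i ∉ J`. For fixed `a < b` these pieces are separated from each other. -/
def levelPiece (p : ι → Y → ℝ) (a b : ℝ) (J : Set ι) : Set Y :=
  {x | (∀ i ∈ J, b ≤ p i x) ∧ ∀ i ∉ J, p i x ≤ a}

theorem isClosed_levelPiece [TopologicalSpace Y] {p : ι → Y → ℝ} (hp : ∀ i, Continuous (p i))
    (a b : ℝ) (J : Set ι) : IsClosed (levelPiece p a b J) := by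
  simp only [levelPiece, ofPred_and, ofPred_forall]
  exact (isClosed_biInter fun i _ => isClosed_le continuous_const (hp i)).inter
    (isClosed_biInter fun i _ => isClosed_le (hp i) continuous_const)

theorem pairwise_disjoint_levelPiece (p : ι → Y → ℝ) {a b : ℝ} (hab : a < b) :
    Pairwise (Disjoint on levelPiece p a b) := by
  refine fun J J' hne => disjoint_left.2 fun x hx hx' => hne (Set.ext fun i => ⟨fun hi => ?_,
    fun hi => ?_⟩) <;> by_contra hi'
  · exact absurd ((hx.1 i hi).trans (hx'.2 i hi')) hab.not_ge
  · exact absurd ((hx'.1 i hi).trans (hx.2 i hi')) hab.not_ge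

theorem mem_levelPiece_of_forall_notMem_Ioo {p : ι → Y → ℝ} {a b : ℝ} {x : Y}
    (h : ∀ i, p i x ∉ Ioo a b) : x ∈ levelPiece p a b {i | b ≤ p i x} :=
  ⟨fun _ hi => hi, fun i hi => not_lt.1 fun ha => h i ⟨ha, not_le.1 hi⟩⟩

theorem ncard_setOf_exists_mem_Ioo_le [Finite ι] (m : ℕ) (v : ι → ℝ) :
    {s : Fin m | ∃ i, v i ∈ Ioo (s : ℝ) (s + 1)}.ncard ≤ {i | 0 < v i}.ncard := by
  cases isEmpty_or_nonempty ι
  · simp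
  choose! i hi using fun (s : Fin m) (hs : ∃ i, v i ∈ Ioo (s : ℝ) (s + 1)) => hs
  refine ncard_le_ncard_of_injOn i (fun s hs => (Nat.cast_nonneg _).trans_lt (hi s hs).1)
    (fun s hs t ht hst => ?_) (toFinite _)
  have hs' := hi s hs
  have ht' := hi t ht
  rw [← hst] at ht'
  have hlt : (s : ℕ) < t + 1 := by exact_mod_cast hs'.1.trans ht'.2
  have hgt : (t : ℕ) < s + 1 := by exact_mod_cast ht'.1.trans hs'.2
  omega

end LevelPieces

/-- `IsMultiCover C N ε E`: the families `E s` consist of closed sets of diameter at most `ε`, and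
every point of `C` is missed by at most `N` of the families. -/
structure IsMultiCover {Y σ ι : Type*} [PseudoMetricSpace Y] (C : Set Y) (N : ℕ) (ε : ℝ)
    (E : σ → ι → Set Y) : Prop where
  isClosed : ∀ s j, IsClosed (E s j)
  dist_le : ∀ s j, ∀ x ∈ E s j, ∀ y ∈ E s j, dist x y ≤ ε
  ncard_le : ∀ x ∈ C, {s | ∀ j, x ∉ E s j}.ncard ≤ N

theorem IsMultiCover.mono_mesh {Y σ ι : Type*} [PseudoMetricSpace Y] {C : Set Y} {N : ℕ}
    {ε ε' : ℝ} {E : σ → ι → Set Y} (h : IsMultiCover C N ε E) (hε : ε ≤ ε') :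
    IsMultiCover C N ε' E :=
  ⟨h.isClosed, fun s j x hx y hy => (h.dist_le s j x hx y hy).trans hε, h.ncard_le⟩

/-- Slice the values of a bump covering into `m` bands: at each point of `C` at most `N` bumps are
nonzero, so at most `N` bands contain a value of one of them. -/
theorem HasFineCovers.exists_disjoint_families {Y : Type u} [PseudoMetricSpace Y] {C : Set Y}
    {N : ℕ} (h : HasFineCovers C N) (hC : IsClosed C) {m : ℕ} (hm : 0 < m) {ε : ℝ} (hε : 0 < ε) :
    ∃ (ι : Type u) (_ : Finite ι) (E : Fin m → ι → Set Y),
      IsMultiCover C N ε E ∧ ∀ s, Pairwise (Disjoint on E s) := by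
  obtain ⟨𝒱, hfin, hsmall, hcov, hord⟩ := h ε hε
  have := hfin.to_subtype
  obtain ⟨p, hp⟩ := BumpCovering.exists_isSubordinate_of_locallyFinite hC
    (fun V : 𝒱 => (V : Set Y)) (fun V => (hsmall V V.2).1) (locallyFinite_of_finite _)
    (by rwa [← sUnion_eq_iUnion])
  have hm' : (0 : ℝ) < m := Nat.cast_pos.2 hm
  have hmem : ∀ V x, 0 < m * p V x → x ∈ (V : Set Y) := fun V x hx =>
    hp V (subset_tsupport _ (pos_of_mul_pos_right hx hm'.le).ne')
  refine ⟨{J : Set 𝒱 // J.Nonempty}, inferInstance,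
    fun s J => levelPiece (fun V x => m * p V x) s (s + 1) J.1,
    ⟨fun s J => isClosed_levelPiece (fun V => continuous_const.mul (p V).continuous) _ _ _,
      ?_, fun x hx => ?_⟩,
    fun s J J' hne => pairwise_disjoint_levelPiece _ (lt_add_one _) (Subtype.coe_injective.ne hne)⟩
  · rintro s ⟨J, V, hV⟩ x hx y hy
    have hpos : (0 : ℝ) < s + 1 := by positivity
    exact (hsmall V V.2).2 x (hmem V x (hpos.trans_le (hx.1 V hV))) y
      (hmem V y (hpos.trans_le (hy.1 V hV)))
  · obtain ⟨V, hV⟩ := p.eventuallyEq_one' x hx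
    have hpV : p V x = 1 := hV.self_of_nhds
    calc {s : Fin m | ∀ J : {J : Set 𝒱 // J.Nonempty}, x ∉ levelPiece _ _ _ J.1}.ncard
        ≤ {s : Fin m | ∃ V, (m * p V x : ℝ) ∈ Ioo (s : ℝ) (s + 1)}.ncard := by
          refine ncard_le_ncard (fun s hs => ?_) (toFinite _)
          by_contra! hgap
          refine hs ⟨_, V, ?_⟩ (mem_levelPiece_of_forall_notMem_Ioo (not_exists.1 hgap))
          change (s + 1 : ℝ) ≤ m * p V x
          rw [hpV, mul_one]
          exact_mod_cast s.2
      _ ≤ {V : 𝒱 | 0 < m * p V x}.ncard := ncard_setOf_exists_mem_Ioo_le m _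
      _ ≤ {V ∈ 𝒱 | x ∈ V}.ncard :=
          ncard_le_ncard_of_injOn Subtype.val (fun V hV => ⟨V.2, hmem V x hV⟩)
            Subtype.val_injective.injOn (hfin.subset (sep_subset _ _))
      _ ≤ N := hord x

/-! ### Maps to the real line separating disjoint closed sets -/

theorem exists_injective_near {ι : Type*} [Finite ι] (a : ι → ℝ) {ε : ℝ} (hε : 0 < ε) :
    ∃ w : ι → ℝ, Injective w ∧ ∀ i, |w i - a i| < ε := by
  obtain ⟨n, ⟨e⟩⟩ := Finite.exists_equiv_fin ι
  have hsep : ∀ i j, ∀ᶠ t : ℝ in 𝓝[≠] 0, i ≠ j → a i + t * (e i : ℕ) ≠ a j + t * (e j : ℕ) := by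
    intro i j
    refine ((finite_singleton ((a j - a i) / ((e i : ℕ) - (e j : ℕ)))).eventually_cofinite_notMem
      |>.filter_mono (nhdsNE_le_cofinite 0)).mono fun t ht hij heq => ht ?_
    have hne : ((e i : ℕ) : ℝ) - (e j : ℕ) ≠ 0 :=
      sub_ne_zero.2 <| Nat.cast_injective.ne <| Fin.val_injective.ne <| e.injective.ne hij
    rw [mem_singleton_iff, eq_div_iff hne]
    linarith
  have hnear : ∀ i, ∀ᶠ t : ℝ in 𝓝[≠] 0, |t * (e i : ℕ)| < ε := fun i => by
    have hcont : Continuous fun t : ℝ => |t * (e i : ℕ)| := by fun_prop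
    exact nhdsWithin_le_nhds ((hcont.tendsto' 0 0 (by simp)).eventually (gt_mem_nhds hε))
  obtain ⟨t, ht, ht'⟩ := ((eventually_all.2 fun i => eventually_all.2 (hsep i)).and
    (eventually_all.2 hnear)).exists
  exact ⟨fun i => a i + t * (e i : ℕ), fun i j hij => by_contra fun hne => ht i j hne hij,
    by simpa using ht'⟩

theorem exists_extension_of_pairwise_disjoint {Z : Type*} [TopologicalSpace Z] [NormalSpace Z]
    {ι : Type*} [Finite ι] {D : ι → Set Z} (hD : ∀ j, IsClosed (D j))
    (hdisj : Pairwise (Disjoint on D)) (u : ι → C(Z, ℝ)) {M : ℝ} (hM : 0 ≤ M)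
    (hu : ∀ j, ∀ z ∈ D j, |u j z| ≤ M) :
    ∃ g : C(Z, ℝ), (∀ z, |g z| ≤ M) ∧ ∀ j, EqOn g (u j) (D j) := by
  have := Fintype.ofFinite ι
  have hv : ∀ j, EqOn (fun z => ∑ i, (D i).indicator (u i) z) (u j) (D j) := by
    intro j z hz
    refine (Finset.sum_eq_single j (fun i _ hij => ?_) (by simp)).trans (indicator_of_mem hz _)
    exact indicator_of_notMem (fun hzi => disjoint_left.1 (hdisj hij) hzi hz) _
  have hcont : ContinuousOn (fun z => ∑ i, (D i).indicator (u i) z) (⋃ j, D j) :=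
    (locallyFinite_of_finite D).continuousOn_iUnion hD fun j =>
      (u j).continuous.continuousOn.congr (hv j)
  obtain ⟨g, hgM, hg⟩ := ContinuousMap.exists_extension_forall_mem_of_isClosedEmbedding
    ⟨_, hcont.domRestrict⟩ (t := Icc (-M) M) (by
      rintro ⟨z, hz⟩
      obtain ⟨j, hj⟩ := mem_iUnion.1 hz
      exact abs_le.1 ((congrArg abs (hv j hj)).trans_le (hu j z hj)))
    ⟨0, by simpa using hM⟩ (isClosed_iUnion_of_finite hD).isClosedEmbedding_subtypeVal
  exact ⟨g, fun z => abs_le.2 (hgM z), fun j z hz =>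
    (congrFun hg ⟨z, mem_iUnion.2 ⟨j, hz⟩⟩).trans (hv j hz)⟩

section Separation

variable {Z : Type*} [TopologicalSpace Z]

theorem exists_const_near_of_oscillation_le [CompactSpace Z] {φ : C(Z, ℝ)} {D : Set Z} {ε : ℝ}
    (hosc : ∀ x ∈ D, ∀ y ∈ D, |φ x - φ y| ≤ ε) :
    ∃ a : ℝ, |a| ≤ ‖φ‖ ∧ ∀ x ∈ D, |a - φ x| ≤ ε := by
  obtain rfl | ⟨z, hz⟩ := D.eq_empty_or_nonempty
  · exact ⟨0, by simp⟩
  · exact ⟨φ z, φ.norm_coe_le_norm z, hosc z hz⟩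

theorem isOpen_setOf_disjoint_image {W : Type*} [TopologicalSpace W] [T2Space W] {K K' : Set Z}
    (hK : IsCompact K) (hK' : IsCompact K') :
    IsOpen {φ : C(Z, W) | Disjoint (φ '' K) (φ '' K')} := by
  refine isOpen_iff_mem_nhds.2 fun φ hφ => ?_
  obtain ⟨U, V, hU, hV, hKU, hKV, hUV⟩ := SeparatedNhds.of_isCompact_isCompact
    (hK.image φ.continuous) (hK'.image φ.continuous) hφ
  filter_upwards
    [(ContinuousMap.isOpen_setOfPred_mapsTo hK hU).mem_nhds (mapsTo_iff_image_subset.2 hKU),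
    (ContinuousMap.isOpen_setOfPred_mapsTo hK' hV).mem_nhds (mapsTo_iff_image_subset.2 hKV)]
    with ψ hψ hψ'
  exact hUV.mono hψ.image_subset hψ'.image_subset

theorem exists_near_pairwise_disjoint_image [CompactSpace Z] [NormalSpace Z] {ι : Type*} [Finite ι]
    {D : ι → Set Z} (hD : ∀ j, IsClosed (D j)) (hdisj : Pairwise (Disjoint on D)) (φ : C(Z, ℝ))
    {ε : ℝ} (hε : 0 < ε) (hosc : ∀ j, ∀ x ∈ D j, ∀ y ∈ D j, |φ x - φ y| ≤ ε) :
    ∃ ψ : C(Z, ℝ), ‖ψ - φ‖ ≤ 2 * ε ∧ Pairwise (Disjoint on fun j => ψ '' D j) := by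
  choose a _ ha using fun j => exists_const_near_of_oscillation_le (hosc j)
  obtain ⟨w, hw, hwa⟩ := exists_injective_near a hε
  obtain ⟨g, hgM, hg⟩ := exists_extension_of_pairwise_disjoint hD hdisj
    (fun j => .const Z (w j) - φ) (M := 2 * ε) (by positivity) fun j x hx => by
      calc |w j - φ x| ≤ |w j - a j| + |a j - φ x| := abs_sub_le _ _ _
        _ ≤ ε + ε := add_le_add (hwa j).le (ha j x hx)
        _ = 2 * ε := (two_mul ε).symm
  refine ⟨φ + g, ?_, fun i j hij => ?_⟩
  · rw [add_sub_cancel_left, ContinuousMap.norm_le _ (by positivity)]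
    exact hgM
  · have himage : ∀ j, (φ + g) '' D j ⊆ {w j} := by
      rintro j _ ⟨x, hx, rfl⟩
      simp [hg j hx]
    exact (disjoint_singleton.2 (hw.ne hij)).mono (himage i) (himage j)

/-- The maps separating some later family form a dense open set, so Baire's theorem applies. -/
theorem exists_frequently_pairwise_disjoint_image [CompactSpace Z] [NormalSpace Z]
    {ι : ℕ → Type*} [∀ q, Finite (ι q)] {D : ∀ q, ι q → Set Z} (hD : ∀ q j, IsClosed (D q j))
    (hdisj : ∀ q, Pairwise (Disjoint on D q))
    (hosc : ∀ ψ : C(Z, ℝ), ∀ ε > 0, ∀ᶠ q in atTop, ∀ j, ∀ x ∈ D q j, ∀ y ∈ D q j,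
      |ψ x - ψ y| ≤ ε) :
    ∃ φ : C(Z, ℝ), ∃ᶠ q in atTop, Pairwise (Disjoint on fun j => φ '' D q j) := by
  let G (r : ℕ) : Set C(Z, ℝ) := ⋃ q ≥ r, {φ | Pairwise (Disjoint on fun j => φ '' D q j)}
  have hopen : ∀ r, IsOpen (G r) := fun r => isOpen_biUnion fun q _ => by
    simp only [Pairwise, onFun, ofPred_forall]
    exact isOpen_iInter_of_finite fun i => isOpen_iInter_of_finite fun j =>
      isOpen_iInter_of_finite fun _ =>
        isOpen_setOf_disjoint_image (hD q i).isCompact (hD q j).isCompact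
  have hdense : ∀ r, Dense (G r) := fun r => Metric.dense_iff.2 fun φ ε hε => by
    obtain ⟨q, hqr, hq⟩ := ((eventually_ge_atTop r).and (hosc φ (ε / 4) (by positivity))).exists
    obtain ⟨ψ, hψ, hψsep⟩ :=
      exists_near_pairwise_disjoint_image (hD q) (hdisj q) φ (by positivity) hq
    refine ⟨ψ, ?_, mem_biUnion hqr hψsep⟩
    rw [Metric.mem_ball, dist_eq_norm]
    linarith
  obtain ⟨φ, hφ⟩ := (dense_iInter_of_isOpen_nat hopen hdense).nonempty
  refine ⟨φ, frequently_atTop.2 fun r => ?_⟩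
  obtain ⟨q, hqr, hq⟩ := mem_iUnion₂.1 (mem_iInter.1 hφ r)
  exact ⟨q, hqr, hq⟩

end Separation

/-! ### Functions as means of functions on the interval -/

theorem exists_forall_dist_lt_abs_sub_le {σ Y : Type*} [Finite σ] [TopologicalSpace σ]
    [PseudoMetricSpace Y] [CompactSpace Y] (ψ : C(σ × Y, ℝ)) {ε : ℝ} (hε : 0 < ε) :
    ∃ δ > 0, ∀ s x y, dist x y < δ → |ψ (s, x) - ψ (s, y)| ≤ ε := by
  have := Fintype.ofFinite σ
  have huc : UniformContinuous fun y s => ψ (s, y) :=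
    CompactSpace.uniformContinuous_of_continuous (by fun_prop)
  obtain ⟨δ, hδ, hψ⟩ := Metric.uniformContinuous_iff.1 huc ε hε
  exact ⟨δ, hδ, fun s x y hxy => (dist_le_pi_dist _ _ s).trans (hψ hxy).le⟩

theorem HasFineCovers.exists_separating_maps {Y : Type u} [PseudoMetricSpace Y] [CompactSpace Y]
    {C : Set Y} {N m : ℕ} (h : HasFineCovers C N) (hC : IsClosed C) (hm : 0 < m) :
    ∃ φ : Fin m → C(Y, unitInterval), ∀ δ > 0, ∃ (ι : Type u) (_ : Finite ι)
      (E : Fin m → ι → Set Y), IsMultiCover C N δ E ∧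
        Pairwise (Disjoint on fun p : Fin m × ι => φ p.1 '' E p.1 p.2) := by
  choose ι hι E hE hdisj using
    fun q : ℕ => h.exists_disjoint_families hC hm (Nat.one_div_pos_of_nat (α := ℝ) (n := q))
  have hmesh : ∀ δ > 0, ∀ᶠ q : ℕ in atTop, 1 / ((q : ℝ) + 1) < δ := fun δ hδ =>
    tendsto_one_div_add_atTop_nhds_zero_nat.eventually (gt_mem_nhds hδ)
  obtain ⟨Φ, hΦ⟩ := exists_frequently_pairwise_disjoint_image (Z := Fin m × Y)
    (D := fun q (p : Fin m × ι q) => {p.1} ×ˢ E q p.1 p.2)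
    (fun q p => isClosed_singleton.prod ((hE q).isClosed p.1 p.2))
    (fun q p p' hne => disjoint_prod.2 <| or_iff_not_imp_left.2 fun hs => by
      obtain ⟨s, j⟩ := p
      obtain ⟨s', j'⟩ := p'
      obtain rfl : s = s' := by simpa using hs
      exact hdisj q s fun hj => hne (Prod.ext rfl hj))
    (fun ψ ε hε => by
      obtain ⟨δ, hδ, hψ⟩ := exists_forall_dist_lt_abs_sub_le ψ hε
      filter_upwards [hmesh δ hδ] with q hq ⟨s, j⟩
      rintro ⟨_, x⟩ ⟨rfl, hx⟩ ⟨_, y⟩ ⟨rfl, hy⟩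
      exact hψ _ x y (((hE q).dist_le _ j x hx y hy).trans_lt hq))
  refine ⟨fun s => ⟨fun y => unitInterval.sigmoid (Φ (s, y)), by fun_prop⟩, fun δ hδ => ?_⟩
  obtain ⟨q, hsep, hq⟩ := (hΦ.and_eventually (hmesh δ hδ)).exists
  refine ⟨ι q, hι q, E q, (hE q).mono_mesh hq.le, fun p p' hne => ?_⟩
  have himage : ∀ p : Fin m × ι q, (fun y => unitInterval.sigmoid (Φ (p.1, y))) '' E q p.1 p.2 =
      unitInterval.sigmoid '' (Φ '' ({p.1} ×ˢ E q p.1 p.2)) := fun p => by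
    simp only [singleton_prod, image_image]
  change Disjoint (_ '' _) (_ '' _)
  simp only [ContinuousMap.coe_mk, himage]
  exact (disjoint_image_iff unitInterval.sigmoid_injective).2 (hsep hne)

/-- The operator sending `g` to the mean of the functions `g ∘ φ s`. -/
def average {ι Y W : Type*} [Fintype ι] [TopologicalSpace Y] [TopologicalSpace W]
    (φ : ι → C(Y, W)) : C(W, ℝ) →ₗ[ℝ] C(Y, ℝ) :=
  (Fintype.card ι : ℝ)⁻¹ • ∑ s, (ContinuousMap.compRightAlgHom ℝ ℝ (φ s)).toLinearMap

theorem average_apply {ι Y W : Type*} [Fintype ι] [TopologicalSpace Y] [TopologicalSpace W]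
    (φ : ι → C(Y, W)) (g : C(W, ℝ)) (y : Y) :
    average φ g y = (Fintype.card ι : ℝ)⁻¹ * ∑ s, g (φ s y) := by
  simp [average]

theorem isPtOperator_average {ι Y W : Type*} [Fintype ι] [TopologicalSpace Y] [TopologicalSpace W]
    [CompactSpace W] (φ : ι → C(Y, W)) : IsPtOperator 1 (average φ) := fun y => by
  simp only [average_apply, Finset.mul_sum]
  refine .sum_mul zero_le_one (fun s _ => .eval (φ s y)) (fun s _ => by positivity) ?_
  rw [Finset.sum_const, nsmul_eq_mul, Finset.card_univ]
  exact mul_inv_le_one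

theorem abs_sub_mean_le {ι : Type*} [Fintype ι] [Nonempty ι] {v : ι → ℝ} {c δ M : ℝ} {N : ℕ}
    (hδ : 0 ≤ δ) (hM : ∀ s, |c - v s| ≤ M) (hN : {s | δ < |c - v s|}.ncard ≤ N) :
    |c - (Fintype.card ι : ℝ)⁻¹ * ∑ s, v s| ≤ δ + N * M / Fintype.card ι := by
  classical
  have hcard : (0 : ℝ) < Fintype.card ι := Nat.cast_pos.2 Fintype.card_pos
  have hM0 : 0 ≤ M := (abs_nonneg _).trans (hM (Classical.arbitrary ι))
  have hterm : ∀ s, |c - v s| ≤ δ + if δ < |c - v s| then M else 0 := fun s => by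
    split_ifs with hs
    · linarith [hM s]
    · linarith
  have hbad : (Finset.univ.filter fun s => δ < |c - v s|).card ≤ N := by
    rwa [← ncard_coe_finset, Finset.coe_filter_univ]
  have hsum : ∑ s, (c - v s) = Fintype.card ι * (c - (Fintype.card ι : ℝ)⁻¹ * ∑ s, v s) := by
    rw [Finset.sum_sub_distrib, Finset.sum_const, nsmul_eq_mul, Finset.card_univ]
    field_simp
  rw [← mul_le_mul_iff_right₀ hcard]
  calc Fintype.card ι * |c - (Fintype.card ι : ℝ)⁻¹ * ∑ s, v s| = |∑ s, (c - v s)| := by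
        rw [hsum, abs_mul, abs_of_pos hcard]
    _ ≤ ∑ s, (δ + if δ < |c - v s| then M else 0) :=
        (Finset.abs_sum_le_sum_abs _ _).trans (Finset.sum_le_sum fun s _ => hterm s)
    _ = Fintype.card ι * δ + (Finset.univ.filter fun s => δ < |c - v s|).card * M := by
        rw [Finset.sum_add_distrib, ← Finset.sum_filter]
        simp
    _ ≤ Fintype.card ι * δ + N * M := by gcongr
    _ = Fintype.card ι * (δ + N * M / Fintype.card ι) := by field_simp

theorem exists_preimage_norm_le_of_approx {E F : Type*} [NormedAddCommGroup E] [CompleteSpace E]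
    [NormedAddCommGroup F] {T : E →+ F} (hT : Continuous T) {c r : ℝ} (hc : 0 ≤ c) (hr0 : 0 ≤ r)
    (hr : r < 1) (happrox : ∀ f, ∃ g, ‖g‖ ≤ c * ‖f‖ ∧ ‖f - T g‖ ≤ r * ‖f‖) (f : F) :
    ∃ g, T g = f ∧ ‖g‖ ≤ c / (1 - r) * ‖f‖ := by
  choose a ha hres using happrox
  let res (n : ℕ) : F := (fun h => h - T (a h))^[n] f
  have hres_succ : ∀ n, res (n + 1) = res n - T (a (res n)) := fun n => iterate_succ_apply' _ _ _
  have hres_le : ∀ n, ‖res n‖ ≤ r ^ n * ‖f‖ := fun n => by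
    induction n with
    | zero => simp [res]
    | succ n ih =>
      rw [hres_succ, pow_succ', mul_assoc]
      exact (hres _).trans (mul_le_mul_of_nonneg_left ih hr0)
  have ha_le : ∀ n, ‖a (res n)‖ ≤ c * ‖f‖ * r ^ n := fun n =>
    (ha _).trans ((mul_le_mul_of_nonneg_left (hres_le n) hc).trans_eq (by ring))
  have hgeom := (hasSum_geometric_of_lt_one hr0 hr).mul_left (c * ‖f‖)
  have hsum : Summable fun n => a (res n) := .of_norm_bounded hgeom.summable ha_le
  refine ⟨∑' n, a (res n), ?_, (tsum_of_norm_bounded hgeom ha_le).trans_eq (by ring)⟩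
  have hres_tendsto : Tendsto res atTop (𝓝 0) := squeeze_zero_norm hres_le <| by
    simpa using (tendsto_pow_atTop_nhds_zero_of_lt_one hr0 hr).mul_const ‖f‖
  have hpartial : ∀ n, ∑ i ∈ Finset.range n, T (a (res i)) = f - res n := fun n => by
    change _ = res 0 - res n
    rw [← Finset.sum_range_sub' res]
    exact Finset.sum_congr rfl fun i _ => by rw [hres_succ, sub_sub_cancel]
  refine tendsto_nhds_unique (hsum.hasSum.map T hT).tendsto_sum_nat ?_
  simpa only [comp_apply, hpartial, sub_zero] using hres_tendsto.const_sub f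

theorem exists_average_near {Y W σ ι : Type*} [PseudoMetricSpace Y] [CompactSpace Y]
    [TopologicalSpace W] [CompactSpace W] [T2Space W] [Fintype σ] [Nonempty σ] [Finite ι]
    {C : Set Y} [CompactSpace C] {N : ℕ} {δ ε : ℝ} {E : σ → ι → Set Y} {φ : σ → C(Y, W)}
    (hE : IsMultiCover C N δ E)
    (hsep : Pairwise (Disjoint on fun p : σ × ι => φ p.1 '' E p.1 p.2))
    (f : C(C, ℝ)) (hε : 0 ≤ ε) (hosc : ∀ x y : C, dist x y ≤ δ → |f x - f y| ≤ ε) :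
    ∃ g : C(W, ℝ), ‖g‖ ≤ ‖f‖ ∧ ‖f - average (fun s => (φ s).restrict C) g‖ ≤
      ε + N * (2 * ‖f‖) / Fintype.card σ := by
  choose a ha haf using fun p : σ × ι => exists_const_near_of_oscillation_le (φ := f)
    (D := Subtype.val ⁻¹' E p.1 p.2) (ε := ε) fun x hx y hy => hosc x y (hE.dist_le _ _ _ hx _ hy)
  obtain ⟨g, hgf, hga⟩ := exists_extension_of_pairwise_disjoint
    (fun p => ((hE.isClosed p.1 p.2).isCompact.image (φ p.1).continuous).isClosed) hsep
    (fun p => .const W (a p)) (norm_nonneg f) fun p _ _ => ha p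
  refine ⟨g, (ContinuousMap.norm_le _ (norm_nonneg f)).2 hgf,
    (ContinuousMap.norm_le _ (by positivity)).2 fun y => ?_⟩
  rw [ContinuousMap.sub_apply, average_apply, Real.norm_eq_abs]
  refine abs_sub_mean_le hε (fun s => ?_) ((ncard_le_ncard (fun s hs j hj => ?_)
    (toFinite _)).trans (hE.ncard_le y y.2))
  · calc |f y - g (φ s y)| ≤ |f y| + |g (φ s y)| := abs_sub _ _
      _ ≤ ‖f‖ + ‖f‖ := add_le_add (f.norm_coe_le_norm y) (hgf _)
      _ = 2 * ‖f‖ := (two_mul _).symm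
  · have hgy : g (φ s y) = a (s, j) := hga (s, j) (mem_image_of_mem _ hj)
    have := haf (s, j) y hj
    rw [← hgy, abs_sub_comm] at this
    exact absurd this (not_le.2 hs)

/-- Since all but a small proportion of the maps `φ s` separate the pieces on which `f` is nearly
constant, `f` is approximated within `‖f‖ / 4` by a mean of functions `g ∘ φ s`, and the error can
be iterated away. -/
theorem HasFineCovers.exists_average_surjective {Y : Type u} [MetricSpace Y] [CompactSpace Y]
    {C : Set Y} [CompactSpace C] {N : ℕ} (h : HasFineCovers C N) :
    ∃ (m : ℕ) (φ : Fin m → C(Y, unitInterval)), ∀ f : C(C, ℝ), ∃ g : C(unitInterval, ℝ),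
      (average φ g).restrict C = f ∧ ‖g‖ ≤ 4 / 3 * ‖f‖ := by
  obtain ⟨φ, hφ⟩ := h.exists_separating_maps (isCompact_iff_compactSpace.2 ‹_›).isClosed
    (Nat.succ_pos (16 * N))
  let T : C(unitInterval, ℝ) →ₗ[ℝ] C(C, ℝ) := average fun s => (φ s).restrict C
  have hT : Continuous T := AddMonoidHomClass.continuous_of_bound T 1 fun g =>
    (isPtOperator_average _).norm_le zero_le_one g
  have happrox : ∀ f, ∃ g, ‖g‖ ≤ 1 * ‖f‖ ∧ ‖f - T g‖ ≤ 1 / 4 * ‖f‖ := fun f => by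
    obtain rfl | hf := eq_or_ne f 0
    · exact ⟨0, by simp⟩
    have hf' : 0 < ‖f‖ := norm_pos_iff.2 hf
    obtain ⟨δ, hδ, hfδ⟩ := Metric.uniformContinuous_iff.1
      (CompactSpace.uniformContinuous_of_continuous f.continuous) (‖f‖ / 8) (by positivity)
    obtain ⟨ι, _, E, hE, hsep⟩ := hφ (δ / 2) (half_pos hδ)
    obtain ⟨g, hg, hfg⟩ := exists_average_near hE hsep f (ε := ‖f‖ / 8) (by positivity)
      fun x y hxy => (hfδ (hxy.trans_lt (half_lt_self hδ))).le
    refine ⟨g, by rwa [one_mul], hfg.trans ?_⟩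
    have hN : (N : ℝ) * (2 * ‖f‖) / Fintype.card (Fin (16 * N).succ) ≤ ‖f‖ / 8 := by
      rw [Fintype.card_fin, div_le_iff₀ (by positivity)]
      push_cast
      nlinarith
    linarith
  refine ⟨_, φ, fun f => ?_⟩
  obtain ⟨g, hg, hgf⟩ := exists_preimage_norm_le_of_approx
    (T := (T : C(unitInterval, ℝ) →+ C(C, ℝ))) hT zero_le_one (by norm_num) (by norm_num) happrox f
  refine ⟨g, ?_, hgf.trans_eq (by norm_num)⟩
  rw [← hg]
  ext y
  simp [T, average_apply]

/-! ### Gluing along annuli -/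

theorem summable_mul_of_sum_le_one {ι Y : Type*} [TopologicalSpace Y] [CompactSpace Y]
    {θ u : ι → C(Y, ℝ)} (hθ : ∀ i x, 0 ≤ θ i x) (hsum : ∀ (s : Finset ι) x, ∑ i ∈ s, θ i x ≤ 1)
    (hu : ∀ ε > 0, ∀ᶠ i in cofinite, ∀ x, θ i x ≠ 0 → |u i x| ≤ ε) :
    Summable fun i => θ i * u i := by
  refine summable_iff_vanishing_norm.2 fun ε hε => ?_
  have hfin := hu (ε / 2) (half_pos hε)
  refine ⟨hfin.toFinset, fun t ht => lt_of_le_of_lt ?_ (half_lt_self hε)⟩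
  refine (ContinuousMap.norm_le _ (half_pos hε).le).2 fun x => ?_
  rw [ContinuousMap.coe_sum, Finset.sum_apply]
  calc ‖∑ i ∈ t, (θ i * u i) x‖ ≤ ∑ i ∈ t, θ i x * (ε / 2) := by
        refine norm_sum_le_of_le _ fun i hi => ?_
        have hi' : ∀ x, θ i x ≠ 0 → |u i x| ≤ ε / 2 :=
          not_not.1 fun h => Finset.disjoint_left.1 ht hi (hfin.mem_toFinset.2 h)
        rw [ContinuousMap.mul_apply, norm_mul, Real.norm_of_nonneg (hθ i x)]
        by_cases h0 : θ i x = 0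
        · simp [h0]
        · exact mul_le_mul_of_nonneg_left (hi' x h0) (hθ i x)
    _ ≤ ε / 2 := by
        rw [← Finset.sum_mul]
        exact mul_le_of_le_one_left (half_pos hε).le (hsum t x)

section Annuli

variable {Y : Type*} [TopologicalSpace Y] {ρ : C(Y, unitInterval)} {n m N : ℕ} {x : Y}

/-- A function that vanishes where `4 ^ n * ρ ≤ 1` and equals `1` where `4 ^ n * ρ ≥ 2`. -/
def cutoff (ρ : C(Y, unitInterval)) (n : ℕ) : C(Y, ℝ) :=
  ⟨fun x => max 0 (min 1 (4 ^ n * (ρ x : ℝ) - 1)), by fun_prop⟩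

/-- The `n`-th member of a partition of unity on the complement of the zero set of `ρ`; it is
supported in `annulus ρ n`. -/
def annulusBump (ρ : C(Y, unitInterval)) (n : ℕ) : C(Y, ℝ) :=
  cutoff ρ (n + 1) - cutoff ρ n

/-- The closed region `4 ^ (-(n + 1)) ≤ ρ ≤ 2 * 4 ^ (-n)`. -/
def annulus (ρ : C(Y, unitInterval)) (n : ℕ) : Set Y :=
  {x | 1 ≤ 4 ^ (n + 1) * (ρ x : ℝ) ∧ 4 ^ n * (ρ x : ℝ) ≤ 2}

theorem cutoff_le_one : cutoff ρ n x ≤ 1 := max_le zero_le_one (min_le_left _ _)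

theorem cutoff_eq_zero (h : 4 ^ n * (ρ x : ℝ) ≤ 1) : cutoff ρ n x = 0 :=
  max_eq_left ((min_le_right _ _).trans (by linarith))

theorem cutoff_eq_one (h : 2 ≤ 4 ^ n * (ρ x : ℝ)) : cutoff ρ n x = 1 := by
  change max 0 (min 1 _) = (1 : ℝ)
  rw [min_eq_left (by linarith), max_eq_right zero_le_one]

theorem monotone_cutoff : Monotone fun n => cutoff ρ n x := fun m n h =>
  max_le_max_left _ <| min_le_min_left _ <| sub_le_sub_right
    (mul_le_mul_of_nonneg_right (pow_le_pow_right₀ (by norm_num) h) (ρ x).2.1) _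

theorem exists_cutoff_eq_one (hx : ρ x ≠ 0) : ∃ N, cutoff ρ N x = 1 := by
  have hpos : (0 : ℝ) < ρ x := unitInterval.pos_iff_ne_zero.2 hx
  obtain ⟨N, hN⟩ := pow_unbounded_of_one_lt (2 / (ρ x : ℝ)) (by norm_num : (1 : ℝ) < 4)
  exact ⟨N, cutoff_eq_one ((div_lt_iff₀ hpos).1 hN).le⟩

theorem annulusBump_nonneg : 0 ≤ annulusBump ρ n x :=
  sub_nonneg.2 (monotone_cutoff n.le_succ)

theorem mem_annulus_of_annulusBump_ne_zero (h : annulusBump ρ n x ≠ 0) : x ∈ annulus ρ n := by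
  have hρ : 4 ^ n * (ρ x : ℝ) ≤ 4 ^ (n + 1) * ρ x :=
    mul_le_mul_of_nonneg_right (pow_le_pow_right₀ (by norm_num) n.le_succ) (ρ x).2.1
  refine ⟨le_of_not_ge fun hle => h ?_, le_of_not_ge fun hge => h ?_⟩ <;>
    rw [annulusBump, ContinuousMap.sub_apply]
  · rw [cutoff_eq_zero hle, cutoff_eq_zero (hρ.trans hle), sub_zero]
  · rw [cutoff_eq_one hge, cutoff_eq_one (hge.trans hρ), sub_self]

theorem sum_range_annulusBump (N : ℕ) (x : Y) :
    ∑ n ∈ Finset.range N, annulusBump ρ n x = cutoff ρ N x := by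
  have h0 : cutoff ρ 0 x = 0 := cutoff_eq_zero (by simpa using (ρ x).2.2)
  rw [← sub_zero (cutoff ρ N x), ← h0, ← Finset.sum_range_sub (fun n => cutoff ρ n x)]
  rfl

theorem sum_annulusBump_le_one (s : Finset ℕ) (x : Y) : ∑ n ∈ s, annulusBump ρ n x ≤ 1 := by
  obtain ⟨N, hN⟩ := s.exists_nat_subset_range
  calc ∑ n ∈ s, annulusBump ρ n x ≤ ∑ n ∈ Finset.range N, annulusBump ρ n x :=
        Finset.sum_le_sum_of_subset_of_nonneg hN fun _ _ _ => annulusBump_nonneg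
    _ ≤ 1 := (sum_range_annulusBump N x).trans_le cutoff_le_one

theorem abs_sum_annulusBump_mul_le {v : ℕ → ℝ} {M : ℝ} (hv : ∀ n, |v n| ≤ M) (s : Finset ℕ)
    (x : Y) : |∑ n ∈ s, annulusBump ρ n x * v n| ≤ M := by
  calc |∑ n ∈ s, annulusBump ρ n x * v n| ≤ ∑ n ∈ s, annulusBump ρ n x * M := by
        refine (Finset.abs_sum_le_sum_abs _ _).trans (Finset.sum_le_sum fun n _ => ?_)
        rw [abs_mul, abs_of_nonneg annulusBump_nonneg]
        exact mul_le_mul_of_nonneg_left (hv n) annulusBump_nonneg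
    _ ≤ M := by
        rw [← Finset.sum_mul]
        exact mul_le_of_le_one_left ((abs_nonneg _).trans (hv 0)) (sum_annulusBump_le_one s x)

theorem annulusBump_eq_zero (h : cutoff ρ N x = 1) (hn : N ≤ n) : annulusBump ρ n x = 0 := by
  have hone : ∀ m, N ≤ m → cutoff ρ m x = 1 := fun m hm =>
    cutoff_le_one.antisymm (h.symm.trans_le (monotone_cutoff hm))
  rw [annulusBump, ContinuousMap.sub_apply, hone _ hn, hone _ (hn.trans n.le_succ), sub_self]

theorem isClosed_annulus (ρ : C(Y, unitInterval)) (n : ℕ) : IsClosed (annulus ρ n) := by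
  rw [annulus, ofPred_and]
  exact (isClosed_le (by fun_prop) (by fun_prop)).inter (isClosed_le (by fun_prop) (by fun_prop))

theorem ne_zero_of_mem_annulus (h : x ∈ annulus ρ n) : ρ x ≠ 0 := fun h0 => by
  have := h.1
  rw [h0] at this
  norm_num at this

theorem eventually_annulus_subset [CompactSpace Y] {U : Set Y} (hU : IsOpen U)
    (h : ∀ x, ρ x = 0 → x ∈ U) : ∀ᶠ n in atTop, annulus ρ n ⊆ U := by
  obtain ⟨a, ha, hρ⟩ := hU.isClosed_compl.isCompact.exists_forall_le'
    (f := fun x => (ρ x : ℝ)) (by fun_prop) (a := 0)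
    fun x hx => unitInterval.pos_iff_ne_zero.2 fun h0 => hx (h x h0)
  have hpow : Tendsto (fun n => (4 : ℝ) ^ n) atTop atTop :=
    tendsto_pow_atTop_atTop_of_one_lt (by norm_num)
  filter_upwards [hpow.eventually_gt_atTop (2 / a)] with n hn x hx
  by_contra hxU
  have : 2 < 4 ^ n * (ρ x : ℝ) := ((div_lt_iff₀ ha).1 hn).trans_le
    (mul_le_mul_of_nonneg_left (hρ x hxU) (by positivity))
  exact this.not_ge hx.2

instance [CompactSpace Y] : CompactSpace (annulus ρ n) :=
  isCompact_iff_compactSpace.1 (isClosed_annulus ρ n).isCompact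

theorem tendsto_norm_restrict_annulus [CompactSpace Y] {f : C(Y, ℝ)}
    (hf : ∀ x, ρ x = 0 → f x = 0) :
    Tendsto (fun n => ‖f.restrict (annulus ρ n)‖) atTop (𝓝 0) := by
  refine NormedAddGroup.tendsto_nhds_zero.2 fun ε hε => ?_
  have hU : IsOpen {x | ‖f x‖ < ε} := isOpen_lt (by fun_prop) continuous_const
  filter_upwards [eventually_annulus_subset hU fun x hx => by simpa [hf x hx] using hε] with n hn
  rw [norm_norm]
  exact (ContinuousMap.norm_lt_iff _ hε).2 fun x => hn x.2

theorem exists_eq_sum_annulusBump [CompactSpace Y] {G : C(Y, ℝ)} {F : ℕ → C(Y, ℝ)}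
    (h : ∀ ε > 0, ∀ᶠ n in atTop, ∀ x ∈ annulus ρ n, |F n x - G x| ≤ ε) :
    ∃ K : C(Y, ℝ), (∀ x, ρ x = 0 → K x = G x) ∧ ∀ N x, cutoff ρ N x = 1 →
      K x = ∑ n ∈ Finset.range N, annulusBump ρ n x * F n x := by
  have hsum : Summable fun n => annulusBump ρ n * (F n - G) :=
    summable_mul_of_sum_le_one (fun n x => annulusBump_nonneg) sum_annulusBump_le_one
      fun ε hε => by
        rw [Nat.cofinite_eq_atTop]
        filter_upwards [h ε hε] with n hn x hx
        exact hn x (mem_annulus_of_annulusBump_ne_zero hx)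
  have happly : ∀ x, (∑' n, annulusBump ρ n * (F n - G)) x =
      ∑' n, (annulusBump ρ n * (F n - G)) x := fun x => (ContinuousMap.tsum_apply hsum x).symm
  refine ⟨G + ∑' n, annulusBump ρ n * (F n - G), fun x hx => ?_, fun N x hN => ?_⟩ <;>
    rw [ContinuousMap.add_apply, happly]
  · have hzero : ∀ n, annulusBump ρ n x = 0 := fun n =>
      not_not.1 fun h0 => ne_zero_of_mem_annulus (mem_annulus_of_annulusBump_ne_zero h0) hx
    simp [hzero]
  · rw [tsum_eq_sum (s := Finset.range N) fun n hn => by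
      rw [ContinuousMap.mul_apply, annulusBump_eq_zero hN (by simpa using hn), zero_mul]]
    simp only [ContinuousMap.mul_apply, ContinuousMap.sub_apply, mul_sub, Finset.sum_sub_distrib]
    rw [← Finset.sum_mul, sum_range_annulusBump, hN]
    ring

theorem IsPtOperator.exists_glue {X : Type*} [TopologicalSpace X] [CompactSpace X] [CompactSpace Y]
    {A : Set Y} {c : ℝ} (hc : 0 ≤ c) (hρ : ρ ⁻¹' {0} = A) {P : C(X, ℝ) → C(A, ℝ)}
    {F : ℕ → C(X, ℝ) → C(Y, ℝ)} (hP : IsPtOperator c P) (hF : ∀ n, IsPtOperator c (F n))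
    (hlim : ∀ v, ∃ G : C(Y, ℝ), G.restrict A = P v ∧
      ∀ ε > 0, ∀ᶠ n in atTop, ∀ x ∈ annulus ρ n, |F n v x - G x| ≤ ε) :
    ∃ L : C(X, ℝ) → C(Y, ℝ), IsPtOperator c L ∧ (∀ v, (L v).restrict A = P v) ∧
      ∀ v f, P v = f.restrict A → (∀ n, ∀ x ∈ annulus ρ n, F n v x = f x) → L v = f := by
  have hmem : ∀ {x}, ρ x = 0 ↔ x ∈ A := fun {x} => by rw [← hρ]; rfl
  choose G hG hGF using hlim
  choose L hLG hLF using fun v => exists_eq_sum_annulusBump (hGF v)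
  have hLA : ∀ v, (L v).restrict A = P v := fun v => by
    rw [← hG v]
    exact ContinuousMap.ext fun a => hLG v a (hmem.2 a.2)
  refine ⟨L, fun x => ?_, hLA, fun v f hPf hFf => ContinuousMap.ext fun x => ?_⟩ <;>
    by_cases hx : x ∈ A
  · convert hP ⟨x, hx⟩ using 2 with v
    exact DFunLike.congr_fun (hLA v) ⟨x, hx⟩
  · obtain ⟨N, hN⟩ := exists_cutoff_eq_one (hmem.not.2 hx)
    simp only [hLF _ N x hN]
    exact .sum_mul hc (fun n _ => hF n x) (fun n _ => annulusBump_nonneg)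
      (sum_annulusBump_le_one _ x)
  · exact DFunLike.congr_fun ((hLA v).trans hPf) ⟨x, hx⟩
  · obtain ⟨N, hN⟩ := exists_cutoff_eq_one (hmem.not.2 hx)
    have hterm : ∀ n, annulusBump ρ n x * F n v x = annulusBump ρ n x * f x := fun n => by
      by_cases h0 : annulusBump ρ n x = 0
      · rw [h0, zero_mul, zero_mul]
      · rw [hFf n x (mem_annulus_of_annulusBump_ne_zero h0)]
    rw [hLF v N x hN, Finset.sum_congr rfl fun n _ => hterm n, ← Finset.sum_mul,
      sum_range_annulusBump, hN, one_mul]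

end Annuli

/-- Affine maps of the unit interval onto disjoint intervals shrinking to `0`; the `n`-th image is
contained in the set where `annulusBump` of the identity equals `1`. -/
def shrink (n : ℕ) : C(unitInterval, unitInterval) :=
  ⟨fun t => ⟨(2 + t) / 4 ^ (n + 1), by
    have := one_le_pow₀ (M₀ := ℝ) (by norm_num : (1 : ℝ) ≤ 4) (n := n)
    exact ⟨div_nonneg (by linarith [t.2.1]) (by positivity),
      (div_le_one (by positivity)).2 (by rw [pow_succ]; linarith [t.2.2])⟩⟩, by fun_prop⟩

theorem four_pow_mul_shrink (n : ℕ) (t : unitInterval) :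
    4 ^ (n + 1) * (shrink n t : ℝ) = 2 + t :=
  mul_div_cancel₀ _ (by positivity)

theorem two_le_four_pow_succ_mul_shrink (n : ℕ) (t : unitInterval) :
    2 ≤ 4 ^ (n + 1) * (shrink n t : ℝ) := by
  linarith [four_pow_mul_shrink n t, t.2.1]

theorem four_pow_mul_shrink_le_one (n : ℕ) (t : unitInterval) : 4 ^ n * (shrink n t : ℝ) ≤ 1 := by
  have := four_pow_mul_shrink n t
  rw [pow_succ] at this
  linarith [t.2.2]

theorem shrink_mem_annulus (n : ℕ) (t : unitInterval) : shrink n t ∈ annulus (.id _) n :=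
  ⟨one_le_two.trans (two_le_four_pow_succ_mul_shrink n t),
    (four_pow_mul_shrink_le_one n t).trans one_le_two⟩

theorem isPtOperator_comp_shrink_sub_const (n : ℕ) :
    IsPtOperator 2 fun g : C(unitInterval, ℝ) => g.comp (shrink n) - .const _ (g 0) := fun t =>
  ((IsPtFunctional.eval (shrink n t)).sub (.eval 0)).mono (by norm_num)

theorem tendsto_comp_shrink_sub_const (g : C(unitInterval, ℝ)) :
    Tendsto (fun n => g.comp (shrink n) - .const _ (g 0)) atTop (𝓝 0) := by
  let h : C(unitInterval, ℝ) := g - .const _ (g 0)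
  have hlim := tendsto_norm_restrict_annulus (ρ := .id unitInterval) (f := h)
    fun x (hx : x = 0) => by simp [h, hx]
  exact squeeze_zero_norm (fun n => (ContinuousMap.norm_le _ (norm_nonneg _)).2 fun t =>
    (h.restrict (annulus (.id _) n)).norm_coe_le_norm ⟨_, shrink_mem_annulus n t⟩) hlim

theorem cutoff_shrink_eq_one (n : ℕ) (t : unitInterval) :
    cutoff (.id unitInterval) (n + 1) (shrink n t) = 1 :=
  cutoff_eq_one (two_le_four_pow_succ_mul_shrink n t)

theorem sum_annulusBump_shrink_mul (v : ℕ → ℝ) (n : ℕ) (t : unitInterval) :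
    ∑ m ∈ Finset.range (n + 1), annulusBump (.id unitInterval) m (shrink n t) * v m = v n := by
  have hlow : cutoff (.id unitInterval) n (shrink n t) = 0 :=
    cutoff_eq_zero (four_pow_mul_shrink_le_one n t)
  have hother : ∀ m ∈ Finset.range n, annulusBump (.id unitInterval) m (shrink n t) = 0 := by
    refine (Finset.sum_eq_zero_iff_of_nonneg fun m _ => annulusBump_nonneg).1 ?_
    rw [sum_range_annulusBump, hlow]
  rw [Finset.sum_range_succ, Finset.sum_eq_zero fun m hm => by rw [hother m hm, zero_mul],
    annulusBump, ContinuousMap.sub_apply, cutoff_shrink_eq_one, hlow]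
  ring

theorem exists_comp_shrink_eq {gs : ℕ → C(unitInterval, ℝ)} {M : ℝ} (hM : ∀ n, ‖gs n‖ ≤ M)
    (hlim : Tendsto gs atTop (𝓝 0)) :
    ∃ g : C(unitInterval, ℝ), ‖g‖ ≤ M ∧ g 0 = 0 ∧ ∀ n, g.comp (shrink n) = gs n := by
  have hM0 : 0 ≤ M := (norm_nonneg _).trans (hM 0)
  let r (n : ℕ) : C(unitInterval, unitInterval) :=
    ⟨fun t => projIcc 0 1 zero_le_one (4 ^ (n + 1) * (t : ℝ) - 2), by fun_prop⟩
  have hr : ∀ n t, r n (shrink n t) = t := fun n t => by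
    simp [r, four_pow_mul_shrink]
  obtain ⟨g, hg0, hg⟩ := exists_eq_sum_annulusBump (ρ := .id unitInterval) (G := 0)
    (F := fun n => (gs n).comp (r n)) fun ε hε => by
      filter_upwards [(tendsto_zero_iff_norm_tendsto_zero.1 hlim).eventually_le_const hε]
        with n hn x _
      simpa using ((gs n).norm_coe_le_norm (r n x)).trans hn
  refine ⟨g, (ContinuousMap.norm_le _ hM0).2 fun x => ?_, hg0 0 rfl, fun n => ?_⟩
  · obtain rfl | hx := eq_or_ne x 0
    · simpa [hg0 0 rfl] using hM0
    obtain ⟨N, hN⟩ := exists_cutoff_eq_one (ρ := .id unitInterval) hx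
    rw [hg N x hN]
    exact abs_sum_annulusBump_mul_le (fun n => ((gs n).norm_coe_le_norm _).trans (hM n)) _ x
  · ext t
    rw [ContinuousMap.comp_apply, hg (n + 1) _ (cutoff_shrink_eq_one n t),
      sum_annulusBump_shrink_mul (fun m => (gs m).comp (r m) (shrink n t)),
      ContinuousMap.comp_apply, hr]

theorem exists_comp_shrink_zero_one_eq {g₀ g₁ : C(unitInterval, ℝ)} {M : ℝ} (h₀ : ‖g₀‖ ≤ M)
    (h₁ : ‖g₁‖ ≤ M) :
    ∃ g : C(unitInterval, ℝ), ‖g‖ ≤ M ∧ g.comp (shrink 0) = g₀ ∧ g.comp (shrink 1) = g₁ := by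
  let gs : ℕ → C(unitInterval, ℝ)
    | 0 => g₀
    | 1 => g₁
    | _ + 2 => 0
  have hgs : ∀ n, ‖gs n‖ ≤ M
    | 0 => h₀
    | 1 => h₁
    | _ + 2 => norm_zero.trans_le ((norm_nonneg g₀).trans h₀)
  obtain ⟨g, hg, -, hcomp⟩ := exists_comp_shrink_eq hgs <|
    (tendsto_add_atTop_iff_nat 2).1 tendsto_const_nhds
  exact ⟨g, hg, hcomp 0, hcomp 1⟩

/-! ### Extension from a closed set -/

theorem exists_preimage_singleton_zero_eq {Y : Type*} [PseudoMetricSpace Y] {A : Set Y}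
    (hA : IsClosed A) :
    ∃ ρ : C(Y, unitInterval), ρ ⁻¹' {0} = A := by
  have : PerfectlyNormalSpace Y := ⟨fun _ hs => hs.isGδ⟩
  obtain ⟨f, rfl, hf⟩ := perfectlyNormalSpace_iff_forall_isClosed_preimage_zero.1 this A hA
  exact ⟨⟨fun x => ⟨f x, hf x⟩, by fun_prop⟩, by ext x; simp [Subtype.ext_iff]⟩

section Step

variable {Y : Type u} [MetricSpace Y] [CompactSpace Y] {A : Set Y}

theorem exists_approx_extension [CompactSpace A] (hA : A.Nonempty) {δ : ℝ} (hδ : 0 < δ) :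
    ∃ e : C(A, ℝ) → C(Y, ℝ), IsPtOperator 1 e ∧ ∀ (G : C(Y, ℝ)) x η,
      (∀ y, dist y x ≤ Metric.infDist x A + δ → |G y - G x| ≤ η) →
        |e (G.restrict A) x - G x| ≤ η := by
  obtain ⟨t, -, htfin, htcover⟩ := finite_cover_balls_of_compact (isCompact_univ (X := Y))
    (half_pos hδ)
  have : Fintype t := htfin.fintype
  obtain ⟨p, hp⟩ := PartitionOfUnity.exists_isSubordinate_of_locallyFinite isClosed_univ
    (fun y : t => Metric.ball (y : Y) (δ / 2)) (fun y => Metric.isOpen_ball)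
    (locallyFinite_of_finite _) (htcover.trans_eq (biUnion_eq_iUnion _ _))
  have hsum : ∀ x, ∑ i, p i x = 1 := fun x => by
    rw [← finsum_eq_sum_of_fintype, p.sum_eq_one (mem_univ x)]
  have hnearest : ∀ y : Y, ∃ a : A, Metric.infDist y A = dist y a := fun y => by
    obtain ⟨a, haA, ha⟩ :=
      (isCompact_iff_compactSpace.2 ‹CompactSpace A›).exists_infDist_eq_dist hA y
    exact ⟨⟨a, haA⟩, ha⟩
  choose a ha using fun i : t => hnearest i
  have happly : ∀ (f : C(A, ℝ)) x, (∑ i, f (a i) • p i) x = ∑ i, p i x * f (a i) := fun f x => by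
    simp [mul_comm]
  refine ⟨fun f => ∑ i, f (a i) • p i, fun x => ?_, fun G x η hG => ?_⟩ <;> simp only [happly]
  · exact .sum_mul zero_le_one (fun i _ => .eval (a i)) (fun i _ => p.nonneg i x) (hsum x).le
  · have hterm : ∀ i, |p i x * (G (a i) - G x)| ≤ p i x * η := fun i => by
      rw [abs_mul, abs_of_nonneg (p.nonneg i x)]
      by_cases h0 : p i x = 0
      · simp [h0]
      have hxi : dist x i < δ / 2 := hp i (subset_tsupport _ h0)
      refine mul_le_mul_of_nonneg_left (hG _ ?_) (p.nonneg i x)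
      have hi : Metric.infDist (i : Y) A ≤ Metric.infDist x A + dist (i : Y) x :=
        Metric.infDist_le_infDist_add_dist
      linarith [dist_triangle (a i : Y) i x, ha i, dist_comm (i : Y) x, dist_comm (i : Y) (a i)]
    calc |∑ i, p i x * G (a i) - G x| = |∑ i, p i x * (G (a i) - G x)| := by
          simp only [mul_sub, Finset.sum_sub_distrib, ← Finset.sum_mul, hsum, one_mul]
      _ ≤ ∑ i, p i x * η := (Finset.abs_sum_le_sum_abs _ _).trans
          (Finset.sum_le_sum fun i _ => hterm i)
      _ = η := by rw [← Finset.sum_mul, hsum, one_mul]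

theorem exists_dugundji_extension [CompactSpace A] :
    ∃ e : C(A, ℝ) → C(Y, ℝ), IsPtOperator 1 e ∧ ∀ f, (e f).restrict A = f := by
  obtain rfl | hne := A.eq_empty_or_nonempty
  · exact ⟨fun _ => 0, fun _ => .zero zero_le_one, fun f => ContinuousMap.ext fun a => a.2.elim⟩
  have hA : IsClosed A := (isCompact_iff_compactSpace.2 ‹_›).isClosed
  obtain ⟨ρ, hρ⟩ := exists_preimage_singleton_zero_eq hA
  choose e he heG using fun n : ℕ =>
    exists_approx_extension hne (Nat.one_div_pos_of_nat (α := ℝ) (n := n))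
  obtain ⟨L, hL, hLA, -⟩ := IsPtOperator.exists_glue (P := id) (F := e) zero_le_one hρ
    (fun a => .eval a) he fun f => by
      obtain ⟨G, rfl⟩ := f.exists_restrict_eq hA
      refine ⟨G, rfl, fun ε hε => ?_⟩
      obtain ⟨δ, hδ, hG⟩ := Metric.uniformContinuous_iff.1
        (CompactSpace.uniformContinuous_of_continuous G.continuous) ε hε
      have hU : IsOpen {x | Metric.infDist x A < δ / 2} :=
        isOpen_lt (Metric.continuous_infDist_pt A) continuous_const
      filter_upwards [eventually_annulus_subset hU fun x hx => by
          simpa [Metric.infDist_zero_of_mem (hρ.subset hx)] using half_pos hδ,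
        tendsto_one_div_add_atTop_nhds_zero_nat.eventually (gt_mem_nhds (half_pos hδ))]
        with n hn hnδ x hx
      have hxA : Metric.infDist x A < δ / 2 := hn hx
      exact heG n G x ε fun y hy => (hG (by linarith)).le
  exact ⟨L, hL, hLA⟩

/-- The factor `2` comes from subtracting `g 0`, which makes the means of the functions
`g ∘ shrink n` tend to zero. -/
theorem exists_isPtOperator_onto_vanishing (hA : IsClosed A)
    (hfd : ∀ x ∉ A, ∃ U, IsOpen U ∧ x ∈ U ∧ FinDimSpace U) :
    ∃ R : C(unitInterval, ℝ) → C(Y, ℝ), IsPtOperator 2 R ∧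
      ∀ f : C(Y, ℝ), (∀ x ∈ A, f x = 0) → ∃ g, R g = f ∧ ‖g‖ ≤ 4 / 3 * ‖f‖ := by
  obtain ⟨ρ, hρ⟩ := exists_preimage_singleton_zero_eq hA
  have hcovers : ∀ n, ∃ N, HasFineCovers (annulus ρ n) N := fun n =>
    exists_hasFineCovers_of_finDimSpace (isClosed_annulus ρ n) fun x hx =>
      hfd x fun hxA => ne_zero_of_mem_annulus hx (hρ.superset hxA)
  choose N hN using hcovers
  choose m φ hφ using fun n => (hN n).exists_average_surjective
  obtain ⟨R, hRpt, -, hRf⟩ := IsPtOperator.exists_glue (c := 2) (X := unitInterval)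
    (P := fun _ => 0) (F := fun n g => average (φ n) (g.comp (shrink n) - .const _ (g 0)))
    zero_le_two hρ (fun _ => .zero zero_le_two)
    (fun n x => (((isPtOperator_average (φ n)).comp zero_le_one zero_le_two
      (isPtOperator_comp_shrink_sub_const n)) x).mono (by norm_num))
    fun g => ⟨0, rfl, fun ε hε => by
      filter_upwards [(tendsto_zero_iff_norm_tendsto_zero.1
        (tendsto_comp_shrink_sub_const g)).eventually_le_const hε] with n hn x _
      have := (isPtOperator_average (φ n) x).abs_le (g.comp (shrink n) - .const _ (g 0))
      rw [one_mul] at this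
      simpa using this.trans hn⟩
  refine ⟨R, hRpt, fun f hf => ?_⟩
  choose gs hgs hgs_le using fun n => hφ n (f.restrict (annulus ρ n))
  have hrestrict : ∀ n, ‖f.restrict (annulus ρ n)‖ ≤ ‖f‖ := fun n =>
    (ContinuousMap.norm_le _ (norm_nonneg f)).2 fun x => f.norm_coe_le_norm x
  have hlim : Tendsto gs atTop (𝓝 0) := by
    refine squeeze_zero_norm hgs_le ?_
    simpa using (tendsto_norm_restrict_annulus fun x hx => hf x (hρ.subset hx)).const_mul (4 / 3)
  obtain ⟨g, hg, hg0, hgcomp⟩ := exists_comp_shrink_eq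
    (fun n => (hgs_le n).trans (mul_le_mul_of_nonneg_left (hrestrict n) (by norm_num))) hlim
  refine ⟨g, hRf g f (ContinuousMap.ext fun a => (hf a a.2).symm) fun n x hx => ?_, hg⟩
  have : (average (φ n) (gs n)).restrict (annulus ρ n) ⟨x, hx⟩ = f x := by rw [hgs]; rfl
  have hconst : ContinuousMap.const unitInterval (0 : ℝ) = 0 := rfl
  rw [← this, hgcomp, hg0, hconst, sub_zero]
  rfl

/-- With `g` split into `g ∘ shrink 0` and `g ∘ shrink 1`, the first part takes care of the values
on `A` and the second one of the rest; `1 / 8` and `7 / 16` are chosen so that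
`1 / 8 + 7 / 16 * 2 = 1`. -/
theorem IsCGoodMap.exists_extend [CompactSpace A]
    (hfd : ∀ x ∉ A, ∃ U, IsOpen U ∧ x ∈ U ∧ FinDimSpace U) {c : ℝ} (hc : 1 ≤ c)
    {L : C(unitInterval, ℝ) →ₗ[ℝ] C(A, ℝ)} (hL : IsCGoodMap c L) :
    ∃ L' : C(unitInterval, ℝ) →ₗ[ℝ] C(Y, ℝ), IsCGoodMap (8 * c) L' := by
  obtain ⟨e, he, heA⟩ := exists_dugundji_extension (A := A)
  obtain ⟨R, hR, hRf⟩ := exists_isPtOperator_onto_vanishing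
    (isCompact_iff_compactSpace.2 ‹CompactSpace A›).isClosed hfd
  have hT : IsPtOperator 1 fun g : C(unitInterval, ℝ) =>
      (1 / 8 : ℝ) • e (L (g.comp (shrink 0))) + (7 / 16 : ℝ) • R (g.comp (shrink 1)) := fun x => by
    have hA := he.comp zero_le_one (by norm_num)
      (hL.isPtOperator.comp zero_le_one zero_le_one (.precomp (shrink 0)))
    have hR' := hR.comp zero_le_two zero_le_one (.precomp (shrink 1))
    exact (((hA x).const_mul (1 / 8)).add ((hR' x).const_mul (7 / 16))).mono (by norm_num)
  refine ⟨_, hT.isCGoodMap fun f => ?_⟩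
  have hrestrict : ‖f.restrict A‖ ≤ ‖f‖ :=
    (ContinuousMap.norm_le _ (norm_nonneg f)).2 fun x => f.norm_coe_le_norm x
  have herror : ‖f - e (f.restrict A)‖ ≤ 2 * ‖f‖ := by
    linarith [norm_sub_le f (e (f.restrict A)), he.norm_le zero_le_one (f.restrict A)]
  obtain ⟨g₀, hg₀, hg₀_le⟩ := hL.2.2 ((8 : ℝ) • f.restrict A)
  obtain ⟨g₁, hg₁, hg₁_le⟩ := hRf ((16 / 7 : ℝ) • (f - e (f.restrict A))) fun x hx => by
    have : e (f.restrict A) x = f x := DFunLike.congr_fun (heA (f.restrict A)) ⟨x, hx⟩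
    simp [this]
  rw [norm_smul, Real.norm_of_nonneg (by norm_num)] at hg₀_le hg₁_le
  obtain ⟨g, hg, hgg₀, hgg₁⟩ := exists_comp_shrink_zero_one_eq (M := 8 * c * ‖f‖)
    (hg₀_le.trans (by nlinarith))
    (hg₁_le.trans (by nlinarith [norm_nonneg f]))
  refine ⟨g, ?_, hg⟩
  rw [hgg₀, hgg₁, hg₀, hg₁, he.isLinearMap.map_smul, smul_smul, smul_smul]
  norm_num

end Step

/-! ### Induction on the height -/

theorem IsCGoodMap.exists_of_homeomorph {X Y Z : Type*} [TopologicalSpace X] [CompactSpace X]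
    [TopologicalSpace Y] [CompactSpace Y] [TopologicalSpace Z] [CompactSpace Z] {c : ℝ}
    {L : C(X, ℝ) →ₗ[ℝ] C(Y, ℝ)} (hL : IsCGoodMap c L) (e : Y ≃ₜ Z) :
    ∃ L' : C(X, ℝ) →ₗ[ℝ] C(Z, ℝ), IsCGoodMap c L' := by
  have hT : IsPtOperator 1 fun g => (L g).comp (e.symm : C(Z, Y)) :=
    fun z => hL.isPtOperator (e.symm z)
  refine ⟨_, hT.isCGoodMap fun f => ?_⟩
  obtain ⟨g, hg, hg_le⟩ := hL.2.2 (f.comp (e : C(Y, Z)))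
  have hnorm : ‖f.comp (e : C(Y, Z))‖ = ‖f‖ := by
    simp only [ContinuousMap.norm_eq_iSup_norm]
    exact e.surjective.iSup_comp fun z => ‖f z‖
  refine ⟨g, ?_, hg_le.trans_eq (by rw [hnorm])⟩
  ext z
  simp [hg]

section Derived

variable {X : Type*} [TopologicalSpace X]

/-- The derivative `S ↦ S \ I(S)`, whose iterates starting at `univ` are the sets `X^[n]`. -/
def fdDeriv (X : Type*) [TopologicalSpace X] (S : Set X) : Set X :=
  S \ fdI X S

theorem fdDerived_natCast (n : ℕ) : fdDerived X n = (fdDeriv X)^[n] univ := by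
  induction n with
  | zero => simp [fdDerived]
  | succ n ih =>
    rw [iterate_succ_apply', ← ih, fdDeriv]
    simp [fdDerived]

theorem isClosed_fdDeriv {S : Set X} (hS : IsClosed S) : IsClosed (fdDeriv X S) := by
  have : fdDeriv X S = S \ ⋃₀ {U | IsOpen U ∧ FinDimSpace ↥(U ∩ S)} := by
    ext x
    simp only [fdDeriv, fdI, Set.mem_sdiff, mem_ofPred_eq, mem_sUnion]
    exact and_congr_right fun hx => not_congr
      ⟨fun ⟨_, U, hU, hxU, hfd⟩ => ⟨U, ⟨hU, hfd⟩, hxU⟩,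
        fun ⟨U, ⟨hU, hfd⟩, hxU⟩ => ⟨hx, U, hU, hxU, hfd⟩⟩
  rw [this]
  exact hS.sdiff (isOpen_sUnion fun U hU => hU.1)

theorem exists_finDimSpace_of_notMem_fdDeriv {S : Set X} (x : S) (hx : x.1 ∉ fdDeriv X S) :
    ∃ U : Set S, IsOpen U ∧ x ∈ U ∧ FinDimSpace U := by
  obtain ⟨-, U, hU, hxU, hfd⟩ : x.1 ∈ fdI X S := not_not.1 fun h => hx ⟨x.2, h⟩
  exact ⟨Subtype.val ⁻¹' U, hU.preimage continuous_subtype_val, hxU, hfd.of_homeomorph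
    { toFun := fun y => ⟨⟨y.1, y.2.2⟩, y.2.1⟩
      invFun := fun y => ⟨y.1.1, y.2, y.1.2⟩ }⟩

end Derived

theorem exists_isCGoodMap_of_iterate_fdDeriv_eq_empty {X : Type u} [MetricSpace X] [CompactSpace X]
    (n : ℕ) {S : Set X} [hS : CompactSpace S] (h : (fdDeriv X)^[n] S = ∅) :
    ∃ L : C(unitInterval, ℝ) →ₗ[ℝ] C(S, ℝ), IsCGoodMap (8 ^ n) L := by
  induction n generalizing S with
  | zero =>
    have : IsEmpty S := isEmpty_coe_sort.2 h
    have hzero : ∀ f : C(S, ℝ), f = 0 := fun f => ContinuousMap.ext fun x => isEmptyElim x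
    exact ⟨0, IsPtOperator.isCGoodMap (L := fun _ => 0) (fun x => isEmptyElim x)
      fun f => ⟨0, by simp [hzero f]⟩⟩
  | succ n ih =>
    have hclosed : IsClosed (fdDeriv X S) :=
      isClosed_fdDeriv (isCompact_iff_compactSpace.2 hS).isClosed
    have : CompactSpace (fdDeriv X S) := isCompact_iff_compactSpace.1 hclosed.isCompact
    let A : Set S := Subtype.val ⁻¹' fdDeriv X S
    have : CompactSpace A :=
      isCompact_iff_compactSpace.1 (hclosed.preimage continuous_subtype_val).isCompact
    let e : fdDeriv X S ≃ₜ A :=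
      { toFun := fun y => ⟨⟨y.1, y.2.1⟩, y.2⟩
        invFun := fun y => ⟨y.1.1, y.2⟩ }
    obtain ⟨L, hL⟩ := ih (S := fdDeriv X S) h
    obtain ⟨L', hL'⟩ := hL.exists_of_homeomorph e
    rw [pow_succ']
    exact hL'.exists_extend exists_finDimSpace_of_notMem_fdDeriv (one_le_pow₀ (by norm_num))

theorem exists_eight_pow_good_of_fdHeight_general (K : Type*) [TopologicalSpace K] [CompactSpace K]
    [TopologicalSpace.MetrizableSpace K] (n : ℕ) (h : fdDerived K (n : Ordinal) = ∅) :
    (∃ L : C(unitInterval, ℝ) →ₗ[ℝ] C(K, ℝ), IsCGoodMap ((8 : ℝ) ^ n) L ∧ Surjective L) ∧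
      LDominates unitInterval K := by
  let _ : MetricSpace K := TopologicalSpace.metrizableSpaceMetric K
  rw [fdDerived_natCast] at h
  have : CompactSpace (univ : Set K) := isCompact_iff_compactSpace.1 isCompact_univ
  obtain ⟨L, hL⟩ := exists_isCGoodMap_of_iterate_fdDeriv_eq_empty n h
  obtain ⟨L', hL'⟩ := hL.exists_of_homeomorph (Homeomorph.Set.univ K)
  have hsurj : Surjective L' := fun f => (hL'.2.2 f).imp fun g hg => hg.1
  exact ⟨⟨L', hL', hsurj⟩, L', hL'.1, hsurj⟩

/-- if `K` is nonempty compact metrizable of fd-height `k+1` then there is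
an `8^(k+1)`-good map of `C_p(I)` onto `C_p(K)`; in particular `I` ℓ-dominates `K`. -/
theorem exists_eight_pow_good_of_fdHeight
    (K : Type*) [TopologicalSpace K] [CompactSpace K]
    [TopologicalSpace.MetrizableSpace K] [Nonempty K] (k : ℕ)
    (h1 : fdDerived K ((k : Ordinal) + 1) = ∅)
    (h2 : fdDerived K (k : Ordinal) ≠ ∅) :
    (∃ L : C(unitInterval, ℝ) →ₗ[ℝ] C(K, ℝ),
        IsCGoodMap ((8 : ℝ) ^ (k + 1)) L ∧ Surjective L) ∧
      LDominates unitInterval K :=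
  exists_eight_pow_good_of_fdHeight_general K (k + 1) (by rwa [Nat.cast_succ])

end
end

section
/- Suppose a Tychonoff space X ℓ-dominates a Tychonoff space Y, and X is hemicompact. Then Y is hemicompact if and only if Y is a μ-space. -/
open Set Function

noncomputable section

/-! A Lindelöf completely regular space is a μ-space, which settles the forward implication. For the
converse, a continuous linear surjection `L : C_p(X) → C_p(Y)` and a bounded set `C ⊆ Y` give a
pointwise bounded family of functionals `f ↦ L f y`, `y ∈ C`. For each `h ∈ C(X)` there is a common
bound `N h` such that all of them are supported on `{|h| ≤ N h}`: otherwise functions `f n`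
vanishing on `{|h| ≤ n}` and not killed by the family would contradict the Banach–Steinhaus theorem
in the Fréchet space `ℝ^ℕ`, mapped into `C_p(X)` by `c ↦ ∑ n, c n • f n`. As each functional has
finite support, the whole family is supported on the intersection `A` of these sets, which is closed
and bounded, hence compact. Banach–Steinhaus for bounded functions on `X`, combined with truncation,
gives `|L f y| ≤ M * sup_A |f|` for `y ∈ C`. On the other hand, for `K` compact in `X`, the points
`y` with `|L f y| ≤ M * sup_K |f|` for all `f` form a closed bounded subset of `Y`, compact when `Y`
is a μ-space; countably many such sets absorb all compact subsets of `Y`. -/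

open Filter Topology BoundedContinuousFunction

section MuSpace

variable {X : Type*} [TopologicalSpace X]

lemma cBounded_of_isCompact {C : Set X} (hC : IsCompact C) : CBounded X C :=
  fun f => hC.exists_bound_of_continuousOn f.continuous.continuousOn

lemma Hemicompact.sigmaCompactSpace (hX : Hemicompact X) : SigmaCompactSpace X := by
  obtain ⟨K, hK, hcof⟩ := hX
  refine ⟨K, hK, eq_univ_of_forall fun x => mem_iUnion.2 ?_⟩
  obtain ⟨n, hn⟩ := hcof {x} isCompact_singleton
  exact ⟨n, hn rfl⟩

/- The sum of the `f i` is positive, so its reciprocal is continuous and hence bounded on `B`: the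
sum is bounded away from `0` on `B`, and it is uniformly approximated by its finite partial sums. -/
lemma CBounded.exists_finset_pos {ι : Type*} {B : Set X} (hB : CBounded X B) {f : ι → C(X, ℝ)}
    {u : ι → ℝ} (hu : Summable u) (hf₀ : ∀ i x, 0 ≤ f i x) (hfu : ∀ i x, f i x ≤ u i)
    (hpos : ∀ x, ∃ i, 0 < f i x) :
    ∃ s : Finset ι, ∀ x ∈ B, ∃ i ∈ s, 0 < f i x := by
  have hnorm : ∀ i x, ‖f i x‖ ≤ u i := fun i x => by
    rw [Real.norm_of_nonneg (hf₀ i x)]; exact hfu i x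
  have hsum_pos : ∀ x, 0 < ∑' i, f i x := fun x => by
    obtain ⟨i, hi⟩ := hpos x
    exact (hu.of_norm_bounded (hnorm · x)).tsum_pos (hf₀ · x) i hi
  have hcont : Continuous fun x => ∑' i, f i x :=
    continuous_tsum (fun i => (f i).continuous) hu hnorm
  obtain ⟨M, hM⟩ := hB ⟨fun x => (∑' i, f i x)⁻¹, hcont.inv₀ fun x => (hsum_pos x).ne'⟩
  have hM_pos : 0 < |M| + 1 := by positivity
  obtain ⟨s, hs⟩ := (Metric.tendstoUniformly_iff.1 (tendstoUniformly_tsum hu hnorm)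
    (|M| + 1)⁻¹ (inv_pos.2 hM_pos)).exists
  refine ⟨s, fun x hx => ?_⟩
  by_contra! hzero
  have hlt : ∑' i, f i x < (|M| + 1)⁻¹ := by
    have hdist := hs x
    rw [Finset.sum_nonpos hzero |>.antisymm (Finset.sum_nonneg fun i _ => hf₀ i x),
      dist_zero_right] at hdist
    exact (le_abs_self _).trans_lt hdist
  have hle : (∑' i, f i x)⁻¹ ≤ |M| := (le_abs_self _).trans ((hM x hx).trans (le_abs_self M))
  linarith [(lt_inv_comm₀ (hsum_pos x) hM_pos).1 hlt]

lemma exists_summable_bumps [LindelofSpace X] [CompletelyRegularSpace X] {U : X → Set X}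
    (hU : ∀ x, U x ∈ 𝓝 x) :
    ∃ (t : Set X) (f : t → C(X, ℝ)) (u : t → ℝ), Summable u ∧ (∀ i x, 0 ≤ f i x) ∧
      (∀ i x, f i x ≤ u i) ∧ (∀ x, ∃ i, 0 < f i x) ∧ ∀ i x, 0 < f i x → x ∈ U i := by
  have hbump : ∀ x, ∃ g : X → unitInterval, Continuous g ∧ g x = 0 ∧ EqOn g 1 (interior (U x))ᶜ :=
    fun x => CompletelyRegularSpace.completely_regular x _ isOpen_interior.isClosed_compl
      fun hx => hx (mem_interior_iff_mem_nhds.2 (hU x))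
  choose g hg hgx hg1 using hbump
  obtain ⟨t, ht, hcover⟩ := LindelofSpace.elim_nhds_subcover (fun x => {z | g x z < 1})
    fun x => (isOpen_lt (hg x) continuous_const).mem_nhds (by simp [hgx])
  obtain ⟨ε, hε, c, hsum, -⟩ := ht.exists_pos_hasSum_le one_pos
  refine ⟨t, fun i => ⟨fun z => ε i * (1 - g i z), by have := hg i; fun_prop⟩, fun i => ε i,
    hsum.summable, fun i z => mul_nonneg (hε i).le (sub_nonneg.2 (g i z).2.2),
    fun i z => mul_le_of_le_one_right (hε i).le (sub_le_self 1 (g i z).2.1), fun z => ?_,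
    fun i z hz => ?_⟩
  · obtain ⟨x, hx, hz⟩ := mem_iUnion₂.1 (hcover.symm ▸ mem_univ z : z ∈ ⋃ x ∈ t, {z | g x z < 1})
    exact ⟨⟨x, hx⟩, mul_pos (hε x) (sub_pos.2 hz)⟩
  · by_contra hzU
    have : g i z = 1 := hg1 i fun h => hzU (interior_subset h)
    simp [this] at hz

lemma CBounded.elim_nhds_subcover [LindelofSpace X] [CompletelyRegularSpace X] {B : Set X}
    (hB : CBounded X B) {U : X → Set X} (hU : ∀ x, U x ∈ 𝓝 x) :
    ∃ s : Finset X, B ⊆ ⋃ x ∈ s, U x := by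
  obtain ⟨t, f, u, hu, hf₀, hfu, hpos, hfU⟩ := exists_summable_bumps hU
  obtain ⟨s, hs⟩ := hB.exists_finset_pos hu hf₀ hfu hpos
  refine ⟨s.map (Embedding.subtype _), fun x hx => ?_⟩
  obtain ⟨i, hi, hix⟩ := hs x hx
  exact mem_iUnion₂.2 ⟨i, Finset.mem_map_of_mem _ hi, hfU i x hix⟩

theorem muSpace_of_lindelofSpace (X : Type*) [TopologicalSpace X] [LindelofSpace X]
    [CompletelyRegularSpace X] : MuSpace X := by
  intro B hB hbdd
  rw [isCompact_iff_ultrafilter_le_nhds]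
  intro F hF
  have hBF : B ∈ F := hF (mem_principal_self B)
  by_contra! hlim
  have hescape : ∀ x, ∃ U ∈ 𝓝 x, U ∉ F := fun x =>
    not_subset.1 fun hx => hlim x (isClosed_iff_ultrafilter.1 hB x F hx hBF) hx
  choose U hU hUF using hescape
  obtain ⟨s, hs⟩ := hbdd.elim_nhds_subcover hU
  obtain ⟨x, -, hx⟩ := (Ultrafilter.finite_biUnion_mem_iff s.finite_toSet).1
    (mem_of_superset hBF hs)
  exact hUF x hx

theorem Hemicompact.muSpace [CompletelyRegularSpace X] (hX : Hemicompact X) : MuSpace X :=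
  have := hX.sigmaCompactSpace
  muSpace_of_lindelofSpace X

end MuSpace

section Coordinates

lemma exists_finset_mem_of_forall_eq_zero {ι R : Type*} [TopologicalSpace R] [Zero R]
    {U : Set (ι → R)} (hU : U ∈ 𝓝 0) : ∃ s : Finset ι, ∀ c : ι → R, (∀ i ∈ s, c i = 0) → c ∈ U := by
  rw [nhds_pi, mem_pi'] at hU
  obtain ⟨s, V, hV, hVU⟩ := hU
  exact ⟨s, fun c hc => hVU fun i hi => hc i hi ▸ mem_of_mem_nhds (hV i)⟩

/- A basic neighbourhood of `0` in a product contains the subspace where finitely many coordinates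
vanish, and a linear functional bounded on a subspace is zero there. -/
lemma exists_finset_forall_map_eq_zero {E ι κ : Type*} [AddCommGroup E] [Module ℝ E]
    (e : E →ₗ[ℝ] ι → ℝ) (T : κ → E →ₗ[ℝ] ℝ) {U : Set (ι → ℝ)} (hU : U ∈ 𝓝 0)
    (hT : ∀ v, e v ∈ U → ∀ j, |T j v| < 1) :
    ∃ s : Finset ι, ∀ v, (∀ i ∈ s, e v i = 0) → ∀ j, T j v = 0 := by
  obtain ⟨s, hs⟩ := exists_finset_mem_of_forall_eq_zero hU
  refine ⟨s, fun v hv j => ?_⟩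
  by_contra hne
  have hlt := hT ((T j v)⁻¹ • v) (hs _ fun i hi => by simp [hv i hi]) j
  simp [hne] at hlt

theorem exists_finset_forall_map_eq_zero_of_pointwise_bounded {ι κ : Type*} [Countable ι]
    (T : κ → (ι → ℝ) →L[ℝ] ℝ) (hT : ∀ c, ∃ M, ∀ j, |T j c| ≤ M) :
    ∃ s : Finset ι, ∀ c, (∀ i ∈ s, c i = 0) → ∀ j, T j c = 0 := by
  have hequi : UniformEquicontinuous ((↑) ∘ T : κ → (ι → ℝ) → ℝ) :=
    (norm_withSeminorms ℝ ℝ).banach_steinhaus fun _ c => by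
      obtain ⟨M, hM⟩ := hT c
      exact ⟨M, forall_mem_range.2 hM⟩
  have hU := Metric.equicontinuousAt_iff_right.1 (hequi.equicontinuous 0) 1 one_pos
  exact exists_finset_forall_map_eq_zero .id (fun j => (T j).toLinearMap) hU fun c hc j => by
    simpa using hc j

end Coordinates

section LocallyFiniteSum

variable {X ι : Type*} [TopologicalSpace X] (f : ι → C(X, ℝ))
  (hf : LocallyFinite fun i => support (f i))

include hf in
lemma finite_support_mul_apply (c : ι → ℝ) (x : X) : (support fun i => c i * f i x).Finite :=
  (hf.point_finite x).subset fun _ hi => right_ne_zero_of_mul hi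

/-- The linear map `c ↦ ∑ i, c i • f i` from sequences of coefficients to continuous functions
attached to a family `f` with locally finite supports. -/
def locallyFiniteSum : (ι → ℝ) →ₗ[ℝ] C(X, ℝ) where
  toFun c := ⟨fun x => ∑ᶠ i, c i * f i x, continuous_finsum (fun i => by fun_prop)
    (hf.subset fun i x hx => right_ne_zero_of_mul hx)⟩
  map_add' a b := by
    ext x
    simpa [add_mul] using
      finsum_add_distrib (finite_support_mul_apply f hf a x) (finite_support_mul_apply f hf b x)
  map_smul' r c := by
    ext x
    simp [mul_assoc, mul_finsum]

lemma locallyFiniteSum_single [DecidableEq ι] (i : ι) :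
    locallyFiniteSum f hf (Pi.single i 1) = f i := by
  ext x
  refine (finsum_eq_single _ i fun j hj => ?_).trans ?_ <;> simp [*]

lemma continuous_locallyFiniteSum_apply (x : X) :
    Continuous fun c => locallyFiniteSum f hf c x := by
  have hsum : ∀ c, locallyFiniteSum f hf c x =
      ∑ i ∈ (hf.point_finite x).toFinset, c i * f i x := fun c =>
    finsum_eq_sum_of_support_subset _ fun i hi => by
      simpa using right_ne_zero_of_mul hi
  simp only [hsum]
  fun_prop

end LocallyFiniteSum

section PointwiseTopology

variable {X : Type*} [TopologicalSpace X]

lemma continuous_ptTop_iff_s10 {Z : Type*} [TopologicalSpace Z] {G : Z → C(X, ℝ)} :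
    Continuous[_, ptTop X] G ↔ ∀ x, Continuous fun z => G z x :=
  continuous_induced_rng.trans continuous_pi_iff

lemma continuous_comp_of_ptTop {Z : Type*} [TopologicalSpace Z] {ψ : C(X, ℝ) → ℝ}
    (hψ : Continuous[ptTop X, _] ψ) {G : Z → C(X, ℝ)} (hG : ∀ x, Continuous fun z => G z x) :
    Continuous fun z => ψ (G z) :=
  @Continuous.comp _ _ _ _ (ptTop X) _ _ _ hψ (continuous_ptTop_iff_s10.2 hG)

/-- A functional `ψ` on `C(X, ℝ)` is supported on `A` if it kills every function vanishing on `A`;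
for linear `ψ` this says that `ψ f` depends only on the restriction of `f` to `A`. -/
def SupportedOn (ψ : C(X, ℝ) →ₗ[ℝ] ℝ) (A : Set X) : Prop :=
  ∀ f : C(X, ℝ), EqOn f 0 A → ψ f = 0

lemma SupportedOn.mono {ψ : C(X, ℝ) →ₗ[ℝ] ℝ} {A B : Set X} (hA : SupportedOn ψ A) (hAB : A ⊆ B) :
    SupportedOn ψ B :=
  fun f hf => hA f (hf.mono hAB)

lemma SupportedOn.diff {ψ : C(X, ℝ) →ₗ[ℝ] ℝ} {S B D : Set X} (hS : SupportedOn ψ S)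
    (hB : SupportedOn ψ B) (w : C(X, ℝ)) (hwB : EqOn w 0 B) (hwD : EqOn w 1 D) :
    SupportedOn ψ (S \ D) := by
  intro f hf
  have hin : ψ (f * w) = 0 := hB _ fun x hx => by simp [hwB hx]
  have hout : ψ (f * (1 - w)) = 0 := hS _ fun x hx => by
    by_cases hxD : x ∈ D
    · simp [hwD hxD]
    · simp [hf ⟨hx, hxD⟩]
  calc ψ f = ψ (f * w) + ψ (f * (1 - w)) := by rw [← map_add]; ring_nf
    _ = 0 := by rw [hin, hout, add_zero]

lemma SupportedOn.diff_singleton {ψ : C(X, ℝ) →ₗ[ℝ] ℝ} {S : Set X} (hS : SupportedOn ψ S)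
    {h : C(X, ℝ)} {N : ℝ} (hN : SupportedOn ψ {z | |h z| ≤ N}) {x : X} (hx : N < |h x|) :
    SupportedOn ψ (S \ {x}) := by
  refine hS.diff hN ⟨fun z => max (|h z| - N) 0 / (|h x| - N), by fun_prop⟩ (fun z hz => ?_) ?_
  · rw [mem_ofPred_eq] at hz
    simp [max_eq_right (sub_nonpos.2 hz)]
  · simp [max_eq_left (sub_pos.2 hx).le, (sub_pos.2 hx).ne']

lemma SupportedOn.diff_finset {ψ : C(X, ℝ) →ₗ[ℝ] ℝ} {S : Set X} (hS : SupportedOn ψ S)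
    {N : C(X, ℝ) → ℝ} (hN : ∀ h, SupportedOn ψ {z | |h z| ≤ N h}) (D : Finset X)
    (hD : ∀ x ∈ D, ∃ h : C(X, ℝ), N h < |h x|) : SupportedOn ψ (S \ D) := by
  induction D using Finset.cons_induction with
  | empty => simpa using hS
  | cons x D hx ih =>
    obtain ⟨⟨h, hxh⟩, hD⟩ := Finset.forall_mem_cons .. |>.1 hD
    rw [Finset.coe_cons, insert_eq, union_comm, ← sdiff_sdiff]
    exact (ih hD).diff_singleton (hN h) hxh

lemma exists_finset_supportedOn {ψ : C(X, ℝ) →ₗ[ℝ] ℝ} (hψ : Continuous[ptTop X, _] ψ) :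
    ∃ S : Finset X, SupportedOn ψ S := by
  have hball : ψ ⁻¹' Metric.ball 0 1 ∈ @nhds _ (ptTop X) 0 :=
    (@Continuous.tendsto _ _ (ptTop X) _ _ hψ 0) (by simpa using Metric.ball_mem_nhds 0 one_pos)
  rw [ptTop, nhds_induced, mem_comap] at hball
  obtain ⟨U, hU, hUψ⟩ := hball
  obtain ⟨S, hS⟩ := exists_finset_forall_map_eq_zero (ContinuousMap.coeFnLinearMap ℝ)
    (fun _ : Unit => ψ) hU fun f hf _ => by simpa using hUψ hf
  exact ⟨S, fun f hf => hS f hf ()⟩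

lemma SupportedOn.of_forall_abs_le {ψ : C(X, ℝ) →ₗ[ℝ] ℝ} (hψ : Continuous[ptTop X, _] ψ)
    {N : C(X, ℝ) → ℝ} (hN : ∀ h, SupportedOn ψ {z | |h z| ≤ N h}) :
    SupportedOn ψ {x | ∀ h : C(X, ℝ), |h x| ≤ N h} := by
  classical
  obtain ⟨S, hS⟩ := exists_finset_supportedOn hψ
  refine (hS.diff_finset hN {x ∈ S | ∃ h : C(X, ℝ), N h < |h x|} (by simp)).mono ?_
  rintro x ⟨hxS, hx⟩
  simpa [Finset.mem_coe.1 hxS] using hx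

end PointwiseTopology

section UniformBoundedness

variable {X κ : Type*} [TopologicalSpace X] {φ : κ → C(X, ℝ) →ₗ[ℝ] ℝ}
  (hφ : ∀ j, Continuous[ptTop X, _] (φ j)) (hbdd : ∀ f, ∃ M, ∀ j, |φ j f| ≤ M)

include hφ hbdd

lemma exists_finset_forall_notMem_apply_eq_zero {ι : Type*} [Countable ι] {f : ι → C(X, ℝ)}
    (hf : LocallyFinite fun i => support (f i)) :
    ∃ s : Finset ι, ∀ i ∉ s, ∀ j, φ j (f i) = 0 := by
  classical
  let T (j : κ) : (ι → ℝ) →L[ℝ] ℝ :=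
    ⟨φ j ∘ₗ locallyFiniteSum f hf,
      continuous_comp_of_ptTop (hφ j) (continuous_locallyFiniteSum_apply f hf)⟩
  obtain ⟨s, hs⟩ := exists_finset_forall_map_eq_zero_of_pointwise_bounded T fun c => hbdd _
  refine ⟨s, fun i hi j => ?_⟩
  rw [← locallyFiniteSum_single f hf i]
  exact hs _ (fun k hk => Pi.single_eq_of_ne (ne_of_mem_of_not_mem hk hi) 1) j

lemma exists_supportedOn_abs_le (h : C(X, ℝ)) :
    ∃ N : ℝ, ∀ j, SupportedOn (φ j) {x | |h x| ≤ N} := by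
  by_contra! hcon
  simp only [SupportedOn, not_forall] at hcon
  choose j f hf hne using fun n : ℕ => hcon n
  have hloc : LocallyFinite fun n => support (f n) := fun x => by
    obtain ⟨N, hN⟩ := exists_nat_gt |h x|
    refine ⟨{z | |h z| < N}, (isOpen_lt (by fun_prop) continuous_const).mem_nhds hN,
      (finite_lt_nat N).subset ?_⟩
    rintro n ⟨z, hzn, hzN⟩
    by_contra! hNn
    exact hzn (hf n ((mem_ofPred.1 hzN).le.trans (Nat.cast_le.2 (not_lt.1 hNn))))
  obtain ⟨s, hs⟩ := exists_finset_forall_notMem_apply_eq_zero hφ hbdd hloc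
  obtain ⟨n, hn⟩ := Infinite.exists_notMem_finset s
  exact hne n (hs n hn (j n))

lemma exists_isClosed_cBounded_supportedOn :
    ∃ A : Set X, IsClosed A ∧ CBounded X A ∧ ∀ j, SupportedOn (φ j) A := by
  choose N hN using exists_supportedOn_abs_le hφ hbdd
  refine ⟨{x | ∀ h : C(X, ℝ), |h x| ≤ N h}, ?_, fun h => ⟨N h, fun x hx => hx h⟩,
    fun j => .of_forall_abs_le (hφ j) (hN · j)⟩
  simp only [ofPred_forall]
  exact isClosed_iInter fun h => isClosed_le (by fun_prop) continuous_const

lemma exists_forall_abs_le_of_forall_abs_le_one :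
    ∃ M, ∀ f : C(X, ℝ), (∀ x, |f x| ≤ 1) → ∀ j, |φ j f| ≤ M := by
  let T (j : κ) : (X →ᵇ ℝ) →L[ℝ] ℝ :=
    ⟨φ j ∘ₗ toContinuousMapLinearMap X ℝ ℝ,
      continuous_comp_of_ptTop (hφ j) fun x => continuous_eval_const x⟩
  obtain ⟨M, hM⟩ := banach_steinhaus (g := T) fun f => hbdd f.toContinuousMap
  refine ⟨M, fun f hf j => ?_⟩
  let g : X →ᵇ ℝ := .ofNormedAddCommGroup f f.continuous 1 hf
  have hg : ‖g‖ ≤ 1 := norm_ofNormedAddCommGroup_le _ zero_le_one hf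
  exact ((T j).le_of_opNorm_le_of_le (hM j) hg).trans_eq (mul_one M)

theorem exists_cBounded_forall_abs_le :
    ∃ A : Set X, IsClosed A ∧ CBounded X A ∧
      ∃ M, ∀ f : C(X, ℝ), (∀ x ∈ A, |f x| ≤ 1) → ∀ j, |φ j f| ≤ M := by
  obtain ⟨A, hAc, hAb, hA⟩ := exists_isClosed_cBounded_supportedOn hφ hbdd
  obtain ⟨M, hM⟩ := exists_forall_abs_le_of_forall_abs_le_one hφ hbdd
  refine ⟨A, hAc, hAb, M, fun f hf j => ?_⟩
  let g : C(X, ℝ) := ⟨fun x => max (-1) (min 1 (f x)), by fun_prop⟩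
  have hgf : EqOn (f - g) 0 A := fun x hx => by
    obtain ⟨hlo, hhi⟩ := abs_le.1 (hf x hx)
    simp [g, min_eq_right hhi, max_eq_right hlo]
  have hφg : φ j f = φ j g := sub_eq_zero.1 (by rw [← map_sub]; exact hA j _ hgf)
  rw [hφg]
  exact hM g (fun x => abs_le.2 ⟨le_max_left _ _, max_le (by norm_num) (min_le_left _ _)⟩) j

end UniformBoundedness

section LDominates

variable {X Y : Type*} [TopologicalSpace X] [TopologicalSpace Y]

/-- The points `y` at which the functional `f ↦ L f y` is bounded by `M` on the functions of
absolute value at most `1` on `K`. These sets, for `K` in a cofinal sequence of compact subsets of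
`X` and `M : ℕ`, are the candidates for such a sequence in `Y`. -/
def evalBoundedSet (L : C(X, ℝ) →ₗ[ℝ] C(Y, ℝ)) (K : Set X) (M : ℝ) : Set Y :=
  {y | ∀ f : C(X, ℝ), (∀ x ∈ K, |f x| ≤ 1) → |L f y| ≤ M}

lemma isClosed_evalBoundedSet (L : C(X, ℝ) →ₗ[ℝ] C(Y, ℝ)) (K : Set X) (M : ℝ) :
    IsClosed (evalBoundedSet L K M) := by
  simp only [evalBoundedSet, ofPred_forall]
  exact isClosed_iInter fun f => isClosed_iInter fun _ =>
    isClosed_le (by fun_prop) continuous_const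

lemma evalBoundedSet_mono (L : C(X, ℝ) →ₗ[ℝ] C(Y, ℝ)) {K K' : Set X} (hK : K ⊆ K') {M M' : ℝ}
    (hM : M ≤ M') : evalBoundedSet L K M ⊆ evalBoundedSet L K' M' :=
  fun _ hy f hf => (hy f fun x hx => hf x (hK hx)).trans hM

lemma cBounded_evalBoundedSet {L : C(X, ℝ) →ₗ[ℝ] C(Y, ℝ)} (hL : Surjective L) {K : Set X}
    (hK : CBounded X K) (M : ℝ) : CBounded Y (evalBoundedSet L K M) := by
  intro g
  obtain ⟨f, rfl⟩ := hL g
  obtain ⟨r, hr⟩ := hK f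
  have hs : 0 < |r| + 1 := by positivity
  refine ⟨(|r| + 1) * M, fun y hy => ?_⟩
  have hscaled : |L ((|r| + 1)⁻¹ • f) y| ≤ M := hy _ fun x hx => by
    rw [ContinuousMap.smul_apply, smul_eq_mul, abs_mul, abs_of_pos (inv_pos.2 hs),
      inv_mul_le_one₀ hs]
    linarith [hr x hx, le_abs_self r]
  rwa [map_smul, ContinuousMap.smul_apply, smul_eq_mul, abs_mul, abs_of_pos (inv_pos.2 hs),
    inv_mul_le_iff₀ hs] at hscaled

theorem CBounded.exists_subset_evalBoundedSet (hX : MuSpace X) {L : C(X, ℝ) →ₗ[ℝ] C(Y, ℝ)}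
    (hL : Continuous[ptTop X, ptTop Y] L) {C : Set Y} (hC : CBounded Y C) :
    ∃ A : Set X, IsCompact A ∧ ∃ M, C ⊆ evalBoundedSet L A M := by
  let φ (y : C) : C(X, ℝ) →ₗ[ℝ] ℝ := (ContinuousMap.evalCLM ℝ (y : Y)).toLinearMap ∘ₗ L
  have hφ : ∀ y, Continuous[ptTop X, _] (φ y) := fun y =>
    (@continuous_ptTop_iff_s10 _ _ _ (ptTop X) _).1 hL y
  have hbdd : ∀ f, ∃ M, ∀ y, |φ y f| ≤ M := fun f =>
    (hC (L f)).imp fun M hM y => hM y y.2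
  obtain ⟨A, hAc, hAb, M, hM⟩ := exists_cBounded_forall_abs_le hφ hbdd
  exact ⟨A, hX A hAc hAb, M, fun y hy f hf => hM f hf ⟨y, hy⟩⟩

theorem LDominates.hemicompact (h : LDominates X Y) (hX : Hemicompact X) (hμX : MuSpace X)
    (hμY : MuSpace Y) : Hemicompact Y := by
  obtain ⟨L, hL, hsurj⟩ := h
  obtain ⟨K, hK, hcof⟩ := hX
  have hcompact : ∀ n M, IsCompact (evalBoundedSet L (K n) M) := fun n M =>
    hμY _ (isClosed_evalBoundedSet L _ M)
      (cBounded_evalBoundedSet hsurj (cBounded_of_isCompact (hK n)) M)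
  refine ⟨fun i => evalBoundedSet L (K i.unpair.1) i.unpair.2, fun i => hcompact _ _,
    fun C hC => ?_⟩
  obtain ⟨A, hA, M, hCA⟩ := (cBounded_of_isCompact hC).exists_subset_evalBoundedSet hμX hL
  obtain ⟨n, hn⟩ := hcof A hA
  obtain ⟨m, hm⟩ := exists_nat_ge M
  refine ⟨Nat.pair n m, ?_⟩
  simp only [Nat.unpair_pair]
  exact hCA.trans (evalBoundedSet_mono L hn hm)

end LDominates

theorem hemicompact_iff_muSpace_of_ellDominated_general {X Y : Type*} [TopologicalSpace X]
    [CompletelyRegularSpace X] [TopologicalSpace Y] [CompletelyRegularSpace Y]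
    (h : LDominates X Y) (hX : Hemicompact X) : Hemicompact Y ↔ MuSpace Y :=
  ⟨Hemicompact.muSpace, h.hemicompact hX hX.muSpace⟩

/-- if a hemicompact Tychonoff space ℓ-dominates `Y`, then `Y` is
hemicompact iff `Y` is a μ-space. -/
theorem hemicompact_iff_muSpace_of_ellDominated
    (X Y : Type*) [TopologicalSpace X] [T35Space X] [TopologicalSpace Y] [T35Space Y]
    (h : LDominates X Y) (hX : Hemicompact X) :
    Hemicompact Y ↔ MuSpace Y :=
  hemicompact_iff_muSpace_of_ellDominated_general h hX

end
end
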